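/- Let H ≤ G be an embedding of linearly reductive quantum groups. The canonical map can: C(G,H) → Ẑ(G,H), sending the generator g_V for V ∈ Ĝ to the central character of V restricted to the relative center Z(G,H) = Z(G) ∩ H, is a group isomorphism. -/

import Mathlib

/- Common infrastructure: right comodules over coalgebras, simplicity,
cosemisimplicity, subcoalgebras, adjoint coactions, normality, etc. -/

open TensorProduct

universe u

namespace QG

variable (k : Type u) [Field k]

section Coalg

variable (C : Type u) [AddCommGroup C] [Module k C] [Coalgebra k C]

/-- `ρ : V →ₗ[k] V ⊗[k] C` is a (coassociative, counital) right coaction. -/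
structure IsComod {V : Type u} [AddCommGroup V] [Module k V]
    (ρ : V →ₗ[k] V ⊗[k] C) : Prop where
  coassoc : ∀ v : V, ρ.rTensor C (ρ v) =
    (TensorProduct.assoc k V C C).symm.toLinearMap
      ((Coalgebra.comul (R := k) (A := C)).lTensor V (ρ v))
  counit : ∀ v : V, (TensorProduct.rid k V)
      ((Coalgebra.counit (R := k) (A := C)).lTensor V (ρ v)) = v

/-- A submodule `U ≤ V` is a subcomodule if the coaction restricts to it,
i.e. maps `U` into the image of `U ⊗ C` in `V ⊗ C`. -/
def IsSubcomod {V : Type u} [AddCommGroup V] [Module k V]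
    (ρ : V →ₗ[k] V ⊗[k] C) (U : Submodule k V) : Prop :=
  ∀ u ∈ U, ρ u ∈ LinearMap.range ((U.subtype).rTensor C)

/-- A simple subcomodule: a nonzero subcomodule with no nonzero proper
subcomodules below it. -/
def IsSimpleSubcomod {V : Type u} [AddCommGroup V] [Module k V]
    (ρ : V →ₗ[k] V ⊗[k] C) (U : Submodule k V) : Prop :=
  IsSubcomod k C ρ U ∧ U ≠ ⊥ ∧
    ∀ U' : Submodule k V, U' ≤ U → IsSubcomod k C ρ U' → U' = ⊥ ∨ U' = U

/-- A comodule is simple if it is simple as a subcomodule of itself. -/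
def IsSimpleComod {V : Type u} [AddCommGroup V] [Module k V]
    (ρ : V →ₗ[k] V ⊗[k] C) : Prop :=
  IsSimpleSubcomod k C ρ ⊤

/-- Morphisms of right `C`-comodules. -/
def IsComodHom {V W : Type u} [AddCommGroup V] [Module k V]
    [AddCommGroup W] [Module k W]
    (ρV : V →ₗ[k] V ⊗[k] C) (ρW : W →ₗ[k] W ⊗[k] C) (f : V →ₗ[k] W) : Prop :=
  ρW ∘ₗ f = (f.rTensor C) ∘ₗ ρV

/-- `C` is cosemisimple: every right `C`-comodule is an (internal) direct sum
of simple subcomodules. -/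
def IsCosemisimple : Prop :=
  ∀ (V : Type u) [AddCommGroup V] [Module k V]
    (ρ : V →ₗ[k] V ⊗[k] C), IsComod k C ρ →
    ∃ (ι : Type u) (U : ι → Submodule k V),
      (∀ i, IsSimpleSubcomod k C ρ (U i)) ∧
      iSupIndep U ∧ (⨆ i, U i) = ⊤

/-- Subcoalgebras of `C`, as submodules. -/
def IsSubcoalgebra (D : Submodule k C) : Prop :=
  ∀ x ∈ D, Coalgebra.comul (R := k) x ∈
    LinearMap.range (TensorProduct.map D.subtype D.subtype)

/-- Simple subcoalgebras: nonzero ones with no nonzero proper subcoalgebras. -/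
def IsSimpleSubcoalgebra (D : Submodule k C) : Prop :=
  IsSubcoalgebra k C D ∧ D ≠ ⊥ ∧
    ∀ D' : Submodule k C, D' ≤ D → IsSubcoalgebra k C D' → D' = ⊥ ∨ D' = D

/-- The coefficient space of a comodule: the smallest submodule `D ≤ C` such
that the coaction factors through `V ⊗ D`.  For a simple comodule this is its
coefficient coalgebra. -/
def coeffSpace {V : Type u} [AddCommGroup V] [Module k V]
    (ρ : V →ₗ[k] V ⊗[k] C) : Submodule k C :=
  sInf {D : Submodule k C | ∀ v : V, ρ v ∈ LinearMap.range ((D.subtype).lTensor V)}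

/-- Corestriction of a coaction along a linear map of coalgebras `π : C → D`. -/
noncomputable def cores {D : Type u} [AddCommGroup D] [Module k D]
    {V : Type u} [AddCommGroup V] [Module k V]
    (π : C →ₗ[k] D) (ρ : V →ₗ[k] V ⊗[k] C) : V →ₗ[k] V ⊗[k] D :=
  (π.lTensor V) ∘ₗ ρ

end Coalg

section Bialg

variable (H : Type u) [Ring H] [Bialgebra k H]

/-- An invariant vector for a coaction of a bialgebra. -/
def IsInvariant {V : Type u} [AddCommGroup V] [Module k V]
    (ρ : V →ₗ[k] V ⊗[k] H) (v : V) : Prop :=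
  ρ v = v ⊗ₜ[k] (1 : H)

/-- The tensor product coaction on `V ⊗ W` for a bialgebra `H`:
`v ⊗ w ↦ (v₀ ⊗ w₀) ⊗ v₁w₁`. -/
noncomputable def tensorCoact {V W : Type u}
    [AddCommGroup V] [Module k V] [AddCommGroup W] [Module k W]
    (ρV : V →ₗ[k] V ⊗[k] H) (ρW : W →ₗ[k] W ⊗[k] H) :
    (V ⊗[k] W) →ₗ[k] (V ⊗[k] W) ⊗[k] H :=
  ((LinearMap.mul' k H).lTensor (V ⊗[k] W)) ∘ₗ
    (TensorProduct.tensorTensorTensorComm k V H W H).toLinearMap ∘ₗ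
    (TensorProduct.map ρV ρW)

/-- `O(G/H)`: the right coinvariants `{x | (id ⊗ π)Δ(x) = x ⊗ 1}` of a
quotient map `π`. -/
noncomputable def quotientSpaceLeft {B : Type u} [AddCommGroup B] [Module k B] [One B]
    (π : H →ₗ[k] B) : Submodule k H :=
  LinearMap.ker ((π.lTensor H) ∘ₗ (Coalgebra.comul (R := k) (A := H)) -
    (TensorProduct.mk k H B).flip 1)

/-- `O(H\G)`: the left coinvariants `{x | (π ⊗ id)Δ(x) = 1 ⊗ x}`. -/
noncomputable def quotientSpaceRight {B : Type u} [AddCommGroup B] [Module k B] [One B]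
    (π : H →ₗ[k] B) : Submodule k H :=
  LinearMap.ker ((π.rTensor H) ∘ₗ (Coalgebra.comul (R := k) (A := H)) -
    (TensorProduct.mk k B H) 1)

end Bialg

section Hopf

variable (H : Type u) [Ring H] [HopfAlgebra k H]

/-- Iterated comultiplication `x ↦ x₁ ⊗ (x₂ ⊗ x₃)`. -/
noncomputable def comul2 : H →ₗ[k] H ⊗[k] (H ⊗[k] H) :=
  ((Coalgebra.comul (R := k) (A := H)).lTensor H) ∘ₗ (Coalgebra.comul (R := k) (A := H))

/-- The right adjoint coaction `x ↦ x₂ ⊗ S(x₁)x₃`. -/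
noncomputable def adR : H →ₗ[k] H ⊗[k] H :=
  ((LinearMap.mul' k H).lTensor H) ∘ₗ
    (TensorProduct.assoc k H H H).toLinearMap ∘ₗ
    (((TensorProduct.comm k H H).toLinearMap).rTensor H) ∘ₗ
    (TensorProduct.assoc k H H H).symm.toLinearMap ∘ₗ
    ((HopfAlgebra.antipode (R := k) (A := H)).rTensor (H ⊗[k] H)) ∘ₗ
    comul2 k H

/-- The left adjoint coaction `x ↦ x₁S(x₃) ⊗ x₂` (a left coaction, with the
coacting tensorand on the left). -/
noncomputable def adL : H →ₗ[k] H ⊗[k] H :=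
  ((LinearMap.mul' k H).rTensor H) ∘ₗ
    (TensorProduct.assoc k H H H).symm.toLinearMap ∘ₗ
    (((TensorProduct.comm k H H).toLinearMap).lTensor H) ∘ₗ
    (((HopfAlgebra.antipode (R := k) (A := H)).lTensor H).lTensor H) ∘ₗ
    comul2 k H

variable {B : Type u} [AddCommGroup B] [Module k B]

/-- `π : O(G) → O(H)` is right-normal: it is a morphism of right
`O(G)`-comodules for the right adjoint coaction, i.e. the right adjoint
coaction descends along `π`. -/
def IsRightNormal (π : H →ₗ[k] B) : Prop :=
  ∃ ρ : B →ₗ[k] B ⊗[k] H, ρ ∘ₗ π = (π.rTensor H) ∘ₗ adR k H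

/-- `π : O(G) → O(H)` is left-normal: the left adjoint coaction descends
along `π`. -/
def IsLeftNormal (π : H →ₗ[k] B) : Prop :=
  ∃ lam : B →ₗ[k] H ⊗[k] B, lam ∘ₗ π = (π.lTensor H) ∘ₗ adL k H

end Hopf

end QG

namespace QG

variable (k : Type u) [Field k]

section Coalg2

variable (C : Type u) [AddCommGroup C] [Module k C] [Coalgebra k C]

/-- A bundled simple right `C`-comodule. -/
structure SimpleComodule where
  V : Type u
  [addCommGroup : AddCommGroup V]
  [module : Module k V]
  ρ : V →ₗ[k] V ⊗[k] C
  isComod : IsComod k C ρ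
  isSimple : IsSimpleComod k C ρ

attribute [instance] SimpleComodule.addCommGroup SimpleComodule.module

/-- A simple comodule `(T, ρT)` is a constituent of a comodule `(V, ρV)`
(over a cosemisimple coalgebra) iff there is a nonzero comodule map `T → V`. -/
def IsConstituent {T V : Type u} [AddCommGroup T] [Module k T]
    [AddCommGroup V] [Module k V]
    (ρT : T →ₗ[k] T ⊗[k] C) (ρV : V →ₗ[k] V ⊗[k] C) : Prop :=
  ∃ f : T →ₗ[k] V, f ≠ 0 ∧ IsComodHom k C ρT ρV f

/-- Isomorphism of (simple) comodules. -/
def comodIsoRel (X Y : SimpleComodule k C) : Prop :=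
  ∃ e : X.V ≃ₗ[k] Y.V, IsComodHom k C X.ρ Y.ρ e.toLinearMap

/-- The set `Ĉ` of isomorphism classes of simple right `C`-comodules. -/
def SimpleComodQuot := Quot (comodIsoRel k C)

/-- The isomorphism class of a simple comodule. -/
def SimpleComodule.cls (X : SimpleComodule k C) : SimpleComodQuot k C :=
  Quot.mk _ X

/-- Group-like elements of a coalgebra; these correspond to the
one-dimensional comodules, i.e. to characters. -/
def IsGroupLike (a : C) : Prop :=
  Coalgebra.counit (R := k) (A := C) a = (1 : k) ∧
    Coalgebra.comul (R := k) (A := C) a = a ⊗ₜ[k] a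

/-- A linear map `φ : C → Z` out of a coalgebra is central if
`φ(x₁) ⊗ x₂ = φ(x₂) ⊗ x₁`. -/
def IsCentralMap {Z : Type u} [AddCommGroup Z] [Module k Z] (φ : C →ₗ[k] Z) : Prop :=
  (φ.rTensor C) ∘ₗ (Coalgebra.comul (R := k) (A := C)) =
    (φ.rTensor C) ∘ₗ (TensorProduct.comm k C C).toLinearMap ∘ₗ
      (Coalgebra.comul (R := k) (A := C))

/-- The simple comodule `X` has "central character" `g` with respect to the
quotient map `γ : C → Z`: corestricted along `γ`, the coaction on `X` is a sum
of copies of the character `g`. -/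
def HasCentralChar {Z : Type u} [AddCommGroup Z] [Module k Z]
    (γ : C →ₗ[k] Z) (X : SimpleComodule k C) (g : Z) : Prop :=
  ∀ v : X.V, cores k C γ X.ρ v = v ⊗ₜ[k] g

end Coalg2

/-- The k-span of the set of products `g * a`, `a ∈ Am`; for `Am` a submodule
this is the left ideal generated by `Am`. -/
def leftIdealGen {G : Type u} [Ring G] [Module k G] (Am : Submodule k G) :
    Submodule k G :=
  Submodule.span k {x : G | ∃ g : G, ∃ a ∈ Am, x = g * a}

end QG

namespace QG

variable (k : Type u) [Field k]
variable (G Hh : Type u) [Ring G] [HopfAlgebra k G] [Ring Hh] [HopfAlgebra k Hh]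

/-- The defining relators of the relative chain group `C(G,H)`: one relator
`g_U (g_V g_W)⁻¹` whenever `hom_H(U, V ⊗ W) ≠ 0`, i.e. whenever the
restrictions to `H` of `U` and `V ⊗ W` are not disjoint. -/
noncomputable def chainRels (π : G →ₐc[k] Hh) :
    Set (FreeGroup (SimpleComodQuot k G)) :=
  {r | ∃ U V W : SimpleComodule k G,
    (∃ f : U.V →ₗ[k] V.V ⊗[k] W.V, f ≠ 0 ∧
      IsComodHom k Hh (cores k G (π : G →ₗ[k] Hh) U.ρ)
        (cores k G (π : G →ₗ[k] Hh) (tensorCoact k G V.ρ W.ρ)) f) ∧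
    r = FreeGroup.of U.cls * (FreeGroup.of V.cls * FreeGroup.of W.cls)⁻¹}

/-- The relative chain group `C(G,H)`: generators `g_V`, `V ∈ Ĝ`, and
relations `g_U = g_V g_W` whenever `U` and `V ⊗ W` are not disjoint over `H`. -/
noncomputable def ChainGroup (π : G →ₐc[k] Hh) : Type (u + 1) :=
  PresentedGroup (chainRels k G Hh π)

noncomputable instance (π : G →ₐc[k] Hh) : Group (ChainGroup k G Hh π) :=
  inferInstanceAs (Group (PresentedGroup (chainRels k G Hh π)))

/-- The generator `g_V` of the chain group attached to `V ∈ Ĝ`. -/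
noncomputable def chainGen (π : G →ₐc[k] Hh) (x : SimpleComodQuot k G) :
    ChainGroup k G Hh π :=
  PresentedGroup.of x

end QG


namespace QG
section S1
set_option linter.unusedSectionVars false
variable {k : Type u} [Field k]
variable {C : Type u} [AddCommGroup C] [Module k C] [Coalgebra k C]
variable {V W X : Type u} [AddCommGroup V] [Module k V] [AddCommGroup W] [Module k W]
  [AddCommGroup X] [Module k X]
variable {ρV : V →ₗ[k] V ⊗[k] C} {ρW : W →ₗ[k] W ⊗[k] C} {ρX : X →ₗ[k] X ⊗[k] C}

theorem sub_inj (U : Submodule k V) : Function.Injective (U.subtype.rTensor C) :=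
  Module.Flat.rTensor_preserves_injective_linearMap _ U.injective_subtype

noncomputable def resC {ρ : V →ₗ[k] V ⊗[k] C} {U : Submodule k V} (h : IsSubcomod k C ρ U) :
    U →ₗ[k] U ⊗[k] C :=
  (LinearEquiv.ofInjective _ (sub_inj (C := C) U)).symm.toLinearMap ∘ₗ
    (LinearMap.codRestrict _ (ρ ∘ₗ U.subtype) (fun u => h u u.2))

theorem resC_spec {ρ : V →ₗ[k] V ⊗[k] C} {U : Submodule k V} (h : IsSubcomod k C ρ U) (u : U) :
    U.subtype.rTensor C (resC h u) = ρ u := by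
  have := LinearEquiv.apply_symm_apply (LinearEquiv.ofInjective _ (sub_inj (C := C) U))
    ⟨ρ u, h u u.2⟩
  exact congrArg Subtype.val this

theorem resC_hom {ρ : V →ₗ[k] V ⊗[k] C} {U : Submodule k V} (h : IsSubcomod k C ρ U) :
    IsComodHom k C (resC h) ρ U.subtype := by
  ext u
  exact (resC_spec h u).symm

theorem hom_apply {f : V →ₗ[k] W} (h : IsComodHom k C ρV ρW f) (v : V) :
    ρW (f v) = f.rTensor C (ρV v) := LinearMap.congr_fun h v

theorem hom_comp {f : V →ₗ[k] W} {g : W →ₗ[k] X} (hf : IsComodHom k C ρV ρW f)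
    (hg : IsComodHom k C ρW ρX g) : IsComodHom k C ρV ρX (g ∘ₗ f) := by
  ext v
  simp [hom_apply hf, hom_apply hg, LinearMap.rTensor_comp]

theorem hom_of_inj {f : V →ₗ[k] W} {g : W →ₗ[k] X} (hgi : Function.Injective g)
    (hg : IsComodHom k C ρW ρX g) (h : IsComodHom k C ρV ρX (g ∘ₗ f)) :
    IsComodHom k C ρV ρW f := by
  ext v
  apply Module.Flat.rTensor_preserves_injective_linearMap (M := C) g hgi
  have := hom_apply h v
  simp only [LinearMap.comp_apply] at *
  rw [← hom_apply hg, this, LinearMap.rTensor_comp, LinearMap.comp_apply]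

theorem isComod_of_inj {f : V →ₗ[k] W} (hfi : Function.Injective f)
    (hf : IsComodHom k C ρV ρW f) (hW : IsComod k C ρW) : IsComod k C ρV := by
  constructor
  · intro v
    apply Module.Flat.rTensor_preserves_injective_linearMap (M := C) _
      (Module.Flat.rTensor_preserves_injective_linearMap (M := C) f hfi)
    have h1 := hW.coassoc (f v)
    rw [hom_apply hf] at h1
    have e1 : ρW.rTensor C (f.rTensor C (ρV v)) =
        (f.rTensor C).rTensor C (ρV.rTensor C (ρV v)) := by
      rw [← LinearMap.rTensor_comp_apply, ← LinearMap.rTensor_comp_apply,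
        show ρW ∘ₗ f = _ from hf]
    have e2 : ∀ t : V ⊗[k] C, (TensorProduct.assoc k W C C).symm
        ((Coalgebra.comul (R := k) (A := C)).lTensor W (f.rTensor C t)) =
        (f.rTensor C).rTensor C ((TensorProduct.assoc k V C C).symm
        ((Coalgebra.comul (R := k) (A := C)).lTensor V t)) := by
      intro t
      induction t with
      | zero => simp
      | add a b ha hb => simp only [map_add, ha, hb]
      | tmul a b =>
        simp only [LinearMap.rTensor_tmul, LinearMap.lTensor_tmul]
        induction Coalgebra.comul (R := k) b with
        | zero => simp
        | add a b ha hb => simp only [tmul_add, map_add, ha, hb]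
        | tmul a b => simp
    rw [← e1]
    exact h1.trans (e2 _)
  · intro v
    apply hfi
    have h1 := hW.counit (f v)
    rw [hom_apply hf] at h1
    have e2 : ∀ t : V ⊗[k] C, TensorProduct.rid k W
        ((Coalgebra.counit (R := k) (A := C)).lTensor W (f.rTensor C t)) =
        f (TensorProduct.rid k V ((Coalgebra.counit (R := k) (A := C)).lTensor V t)) := by
      intro t
      induction t with
      | zero => simp
      | add a b ha hb => simp only [map_add, ha, hb]
      | tmul a b => simp
    rw [← e2, h1]

theorem range_sub {f : V →ₗ[k] W} (h : IsComodHom k C ρV ρW f) :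
    IsSubcomod k C ρW (LinearMap.range f) := by
  rintro _ ⟨v, rfl⟩
  rw [hom_apply h]
  refine ⟨f.rangeRestrict.rTensor C (ρV v), ?_⟩
  rw [← LinearMap.comp_apply, ← LinearMap.rTensor_comp]
  rfl

theorem ker_sub {f : V →ₗ[k] W} (h : IsComodHom k C ρV ρW f) :
    IsSubcomod k C ρV (LinearMap.ker f) := by
  intro v hv
  have hv' : f v = 0 := hv
  have e : Function.Exact (LinearMap.ker f).subtype f := LinearMap.exact_subtype_ker_map f
  have := Module.Flat.rTensor_exact (R := k) C e
  apply (this _).1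
  rw [← hom_apply h, hv', map_zero]

theorem schur_inj {f : V →ₗ[k] W} (h : IsComodHom k C ρV ρW f) (hs : IsSimpleComod k C ρV)
    (h0 : f ≠ 0) : Function.Injective f := by
  rcases hs.2.2 _ le_top (ker_sub h) with h1 | h1
  · exact LinearMap.ker_eq_bot.1 h1
  · exact (h0 (LinearMap.ker_eq_top.1 h1)).elim

theorem schur_surj {f : V →ₗ[k] W} (h : IsComodHom k C ρV ρW f) (hs : IsSimpleComod k C ρW)
    (h0 : f ≠ 0) : Function.Surjective f := by
  rcases hs.2.2 _ le_top (range_sub h) with h1 | h1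
  · exact (h0 (LinearMap.range_eq_bot.1 h1)).elim
  · exact LinearMap.range_eq_top.1 h1

theorem schur_equiv {f : V →ₗ[k] W} (h : IsComodHom k C ρV ρW f) (hsV : IsSimpleComod k C ρV)
    (hs : IsSimpleComod k C ρW) (h0 : f ≠ 0) : ∃ e : V ≃ₗ[k] W, e.toLinearMap = f ∧
      IsComodHom k C ρW ρV e.symm.toLinearMap := by
  refine ⟨LinearEquiv.ofBijective f ⟨schur_inj h hsV h0, schur_surj h hs h0⟩, rfl, ?_⟩
  apply hom_of_inj (schur_inj h hsV h0) h
  have : f ∘ₗ (LinearEquiv.ofBijective f ⟨schur_inj h hsV h0, schur_surj h hs h0⟩).symm.toLinearMap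
    = LinearMap.id := by
    ext x
    exact LinearEquiv.apply_symm_apply
      (LinearEquiv.ofBijective f ⟨schur_inj h hsV h0, schur_surj h hs h0⟩) x
  rw [this]
  simp [IsComodHom]

theorem resC_simple {ρ : V →ₗ[k] V ⊗[k] C} {U : Submodule k V} (h : IsSimpleSubcomod k C ρ U) :
    IsSimpleComod k C (resC h.1) := by
  have hinj := U.injective_subtype
  refine ⟨?_, ?_, ?_⟩
  · intro u _
    have : LinearMap.range ((⊤ : Submodule k U).subtype.rTensor C) = ⊤ := by
      rw [LinearMap.range_eq_top]
      apply LinearMap.rTensor_surjective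
      intro x
      exact ⟨⟨x, trivial⟩, rfl⟩
    rw [this]
    trivial
  · intro h0
    apply h.2.1
    rw [eq_bot_iff]
    intro x hx
    have : (⟨x, hx⟩ : U) ∈ (⊤ : Submodule k U) := trivial
    rw [h0] at this
    simpa using this
  · intro U' _ hU'
    have hs : IsSubcomod k C ρ (U'.map U.subtype) := by
      have e : U'.map U.subtype = LinearMap.range (U.subtype ∘ₗ U'.subtype) := by
        rw [LinearMap.range_comp, Submodule.range_subtype]
      rw [e]
      exact range_sub (hom_comp (resC_hom hU') (resC_hom h.1))
    rcases h.2.2 _ (Submodule.map_subtype_le _ _) hs with h1 | h1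
    · left
      rw [eq_bot_iff]
      intro x hx
      have : U.subtype x ∈ U'.map U.subtype := ⟨x, hx, rfl⟩
      rw [h1] at this
      simpa using this
    · right
      rw [eq_top_iff]
      rintro ⟨x, hx⟩ -
      have hx' := hx
      rw [← h1] at hx'
      obtain ⟨y, hy, hyx⟩ := hx'
      have : (⟨x, hx⟩ : U) = y := Subtype.ext hyx.symm
      rw [this]
      exact hy

noncomputable def subS {ρ : V →ₗ[k] V ⊗[k] C} (hρ : IsComod k C ρ) {U : Submodule k V}
    (h : IsSimpleSubcomod k C ρ U) : SimpleComodule k C where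
  V := U
  ρ := resC h.1
  isComod := isComod_of_inj U.injective_subtype (resC_hom h.1) hρ
  isSimple := resC_simple h

theorem cls_eq_of_hom {X Y : SimpleComodule k C} (f : X.V →ₗ[k] Y.V) (h0 : f ≠ 0)
    (h : IsComodHom k C X.ρ Y.ρ f) : X.cls = Y.cls := by
  obtain ⟨e, he, -⟩ := schur_equiv h X.isSimple Y.isSimple h0
  exact Quot.sound ⟨e, by rwa [he]⟩

theorem glue {ι : Type u} {U : ι → Submodule k V} (hi : iSupIndep U) (ht : (⨆ i, U i) = ⊤)
    {N : ι → Type u} [∀ i, AddCommGroup (N i)] {M : Type u} [AddCommGroup M] [Module k M]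
    (g : ∀ i, U i →ₗ[k] M) : ∃ χ : V →ₗ[k] M, ∀ i (u : U i), χ u = g i u := by
  classical
  have hI := DirectSum.isInternal_submodule_of_iSupIndep_of_iSup_eq_top hi ht
  let e := LinearEquiv.ofBijective (DirectSum.coeLinearMap U) hI
  refine ⟨DirectSum.toModule k ι M g ∘ₗ e.symm.toLinearMap, fun i u => ?_⟩
  have : e.symm (u : V) = DirectSum.lof k ι (fun i => U i) i u := by
    rw [LinearEquiv.symm_apply_eq]
    exact (DirectSum.coeLinearMap_lof U i u).symm
  simp [this]

theorem projs {ρ : V →ₗ[k] V ⊗[k] C} {ι : Type u} {U : ι → Submodule k V}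
    (hU : ∀ i, IsSubcomod k C ρ (U i)) (hi : iSupIndep U) (ht : (⨆ i, U i) = ⊤) :
    ∃ p : ∀ i, V →ₗ[k] U i, (∀ i, IsComodHom k C ρ (resC (hU i)) (p i)) ∧
      ∀ x, ∃ s : Finset ι, x = ∑ i ∈ s, (p i x : V) := by
  classical
  have H : ∀ i, ∃ p : V →ₗ[k] U i, ∀ j (u : U j), p u =
      if h : j = i then h ▸ u else 0 := by
    intro i
    obtain ⟨χ, hχ⟩ := glue (N := fun _ => U i) hi ht (fun j => if h : j = i then
      (h ▸ LinearMap.id : U j →ₗ[k] U i) else 0)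
    refine ⟨χ, fun j u => ?_⟩
    rw [hχ]
    by_cases h : j = i
    · subst h; simp
    · simp [h]
  choose p hp using H
  refine ⟨p, fun i => ?_, fun x => ?_⟩
  · apply LinearMap.ext
    intro v
    have : v ∈ ⨆ i, U i := ht ▸ trivial
    induction this using Submodule.iSup_induction' with
    | zero => simp
    | add x y _ _ hx hy => simp only [map_add, hx, hy]
    | mem j x hx =>
      have e : (ρ x) = (U j).subtype.rTensor C (resC (hU j) ⟨x, hx⟩) := (resC_spec (hU j) ⟨x, hx⟩).symm
      have e2 := hp i j ⟨x, hx⟩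
      simp only at e2
      rw [LinearMap.comp_apply, LinearMap.comp_apply, e,
        ← LinearMap.rTensor_comp_apply, e2]
      by_cases h : j = i
      · subst h
        have : p j ∘ₗ (U j).subtype = LinearMap.id := by
          ext u; simp [hp j j u]
        rw [this]; simp
      · have : p i ∘ₗ (U j).subtype = 0 := by
          ext u; simp [hp i j u, h]
        rw [this]; simp [h]
  · have : x ∈ ⨆ i, U i := ht ▸ trivial
    obtain ⟨s, hs⟩ := Submodule.exists_finset_of_mem_iSup U this
    obtain ⟨μ, hμ⟩ := (Submodule.mem_iSup_finset_iff_exists_sum U x).1 hs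
    refine ⟨s, ?_⟩
    conv_lhs => rw [← hμ]
    refine Finset.sum_congr rfl fun i hi => ?_
    rw [← hμ, map_sum]
    rw [Finset.sum_eq_single i]
    · rw [hp]; simp
    · intro j _ hj
      rw [hp]; simp [hj]
    · intro h; exact (h hi).elim

/-- nonzero `T → X` gives nonzero `X → T`. -/
theorem rev1 (hC : IsCosemisimple k C) (hX : IsComod k C ρX) (hT : IsSimpleComod k C ρV)
    (f : V →ₗ[k] X) (h0 : f ≠ 0) (hf : IsComodHom k C ρV ρX f) :
    ∃ g : X →ₗ[k] V, g ≠ 0 ∧ IsComodHom k C ρX ρV g := by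
  obtain ⟨ι, U, hU, hi, ht⟩ := hC X ρX hX
  obtain ⟨p, hp, hs⟩ := projs (fun i => (hU i).1) hi ht
  have : ∃ i, p i ∘ₗ f ≠ 0 := by
    by_contra! hh
    apply h0
    ext v
    obtain ⟨s, hs⟩ := hs (f v)
    rw [hs]
    refine Finset.sum_eq_zero fun i _ => ?_
    have := LinearMap.congr_fun (hh i) v
    simp only [LinearMap.comp_apply] at this
    simp [this]
  obtain ⟨i, h1⟩ := this
  obtain ⟨e, he, hes⟩ := schur_equiv (hom_comp hf (hp i)) hT (resC_simple (hU i)) h1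
  refine ⟨e.symm.toLinearMap ∘ₗ p i, ?_, hom_comp (hp i) hes⟩
  intro h2
  apply h1
  ext v
  have := LinearMap.congr_fun h2 (f v)
  simp only [LinearMap.comp_apply, LinearEquiv.coe_coe] at this
  simpa using this

theorem exists_sub (hC : IsCosemisimple k C) (hX : IsComod k C ρX) 
    (f : X →ₗ[k] W) (h0 : f ≠ 0)  :
    ∃ (U : Submodule k X), IsSimpleSubcomod k C ρX U ∧ f ∘ₗ U.subtype ≠ 0 := by
  obtain ⟨ι, U, hU, hi, ht⟩ := hC X ρX hX
  by_contra! hh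
  apply h0
  rw [← LinearMap.ker_eq_top, eq_top_iff, ← ht, iSup_le_iff]
  intro i x hx
  exact LinearMap.congr_fun (hh (U i) (hU i)) ⟨x, hx⟩

/-- nonzero `X → T` gives nonzero `T → X`. -/
theorem rev2 (hC : IsCosemisimple k C) (hX : IsComod k C ρX) (hT : IsSimpleComod k C ρV)
    (f : X →ₗ[k] V) (h0 : f ≠ 0) (hf : IsComodHom k C ρX ρV f) :
    ∃ g : V →ₗ[k] X, g ≠ 0 ∧ IsComodHom k C ρV ρX g := by
  obtain ⟨U, hU, h1⟩ := exists_sub hC hX f h0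
  obtain ⟨e, he, hes⟩ := schur_equiv (hom_comp (resC_hom hU.1) hf) (resC_simple hU) hT h1
  refine ⟨U.subtype ∘ₗ e.symm.toLinearMap, ?_, hom_comp hes (resC_hom hU.1)⟩
  intro h2
  apply h1
  ext v
  have := LinearMap.congr_fun h2 (e v)
  simp at this
  simp [this]

/-- separation of tensors by functionals on the left -/
theorem sep_left {N : Type u} [AddCommGroup N] [Module k N] {s t : V ⊗[k] N}
    (h : ∀ f : V →ₗ[k] k, TensorProduct.lid k N (f.rTensor N s) =
      TensorProduct.lid k N (f.rTensor N t)) : s = t := by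
  classical
  let b := Module.Basis.ofVectorSpace k V
  apply (TensorProduct.equivFinsuppOfBasisLeft (N := N) b).injective
  ext i
  have key : ∀ t : V ⊗[k] N, TensorProduct.equivFinsuppOfBasisLeft (N := N) b t i =
      TensorProduct.lid k N ((b.coord i).rTensor N t) := by
    intro t
    induction t with
    | zero => simp
    | add a b ha hb => simp only [map_add, Finsupp.add_apply, ha, hb]
    | tmul a c => simp
  rw [key, key, h]

theorem sep_right {N : Type u} [AddCommGroup N] [Module k N] {s t : V ⊗[k] N}
    (h : ∀ f : N →ₗ[k] k, TensorProduct.rid k V (f.lTensor V s) =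
      TensorProduct.rid k V (f.lTensor V t)) : s = t := by
  apply (TensorProduct.comm k V N).injective
  apply sep_left
  intro f
  have key : ∀ t : V ⊗[k] N, TensorProduct.lid k V (f.rTensor V (TensorProduct.comm k V N t)) =
      TensorProduct.rid k V (f.lTensor V t) := by
    intro t
    induction t with
    | zero => simp
    | add a b ha hb => simp only [map_add, ha, hb]
    | tmul a c => simp
  rw [key, key, h]

end S1
end QG

namespace QG
section S2
set_option linter.unusedSectionVars false
variable {k : Type u} [Field k]
variable {C : Type u} [AddCommGroup C] [Module k C] [Coalgebra k C]
variable {V W X : Type u} [AddCommGroup V] [Module k V] [AddCommGroup W] [Module k W]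
  [AddCommGroup X] [Module k X]
variable {ρV : V →ₗ[k] V ⊗[k] C} {ρW : W →ₗ[k] W ⊗[k] C} {ρX : X →ₗ[k] X ⊗[k] C}

theorem comul_isComod : IsComod k C (Coalgebra.comul (R := k) (A := C)) := by
  constructor
  · intro v
    simp
  · intro v
    simp

noncomputable def coefHom (ρ : V →ₗ[k] V ⊗[k] C) (f : V →ₗ[k] k) : V →ₗ[k] C :=
  (TensorProduct.lid k C).toLinearMap ∘ₗ f.rTensor C ∘ₗ ρ

theorem coefHom_hom (hV : IsComod k C ρV) (f : V →ₗ[k] k) :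
    IsComodHom k C ρV (Coalgebra.comul (R := k) (A := C)) (coefHom ρV f) := by
  ext v
  have h := hV.coassoc v
  have e2 : ∀ t : V ⊗[k] C, Coalgebra.comul (R := k) (TensorProduct.lid k C (f.rTensor C t)) =
      ((TensorProduct.lid k C).toLinearMap ∘ₗ f.rTensor C).rTensor C
        ((TensorProduct.assoc k V C C).symm
        ((Coalgebra.comul (R := k) (A := C)).lTensor V t)) := by
      intro t
      induction t with
      | zero => simp
      | add a b ha hb => simp only [map_add, ha, hb]
      | tmul a b =>
        simp only [LinearMap.rTensor_tmul, LinearMap.lTensor_tmul, lid_tmul, map_smul]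
        induction Coalgebra.comul (R := k) b with
        | zero => simp
        | add a b ha hb => simp only [tmul_add, map_add, smul_add, ha, hb]
        | tmul a b => simp [smul_tmul']
  have e3 := e2 (ρV v)
  have h' : (TensorProduct.assoc k V C C).symm
      ((Coalgebra.comul (R := k) (A := C)).lTensor V (ρV v)) = ρV.rTensor C (ρV v) := h.symm
  rw [h', ← LinearMap.rTensor_comp_apply] at e3
  exact e3

theorem counit_coefHom (hV : IsComod k C ρV) (f : V →ₗ[k] k) (v : V) :
    Coalgebra.counit (R := k) (coefHom ρV f v) = f v := by
  have e2 : ∀ t : V ⊗[k] C, Coalgebra.counit (R := k) (TensorProduct.lid k C (f.rTensor C t)) =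
      f (TensorProduct.rid k V ((Coalgebra.counit (R := k) (A := C)).lTensor V t)) := by
      intro t
      induction t with
      | zero => simp
      | add a b ha hb => simp only [map_add, ha, hb]
      | tmul a b => simp [mul_comm]
  have := e2 (ρV v)
  rw [hV.counit] at this
  exact this

theorem coef_cores {N : Type u} [AddCommGroup N] [Module k N] (χ : C →ₗ[k] N) (f : V →ₗ[k] k)
    (v : V) : TensorProduct.lid k N (f.rTensor N (cores k C χ ρV v)) = χ (coefHom ρV f v) := by
  have e2 : ∀ t : V ⊗[k] C, TensorProduct.lid k N (f.rTensor N (χ.lTensor V t)) =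
      χ (TensorProduct.lid k C (f.rTensor C t)) := by
      intro t
      induction t with
      | zero => simp
      | add a b ha hb => simp only [map_add, ha, hb]
      | tmul a b => simp
  exact e2 (ρV v)

theorem exists_chi (hC : IsCosemisimple k C) {N : Type u} [AddCommGroup N] [Module k N]
    (γ : SimpleComodQuot k C → N) : ∃ χ : C →ₗ[k] N, ∀ (X : SimpleComodule k C) (v : X.V),
      cores k C χ X.ρ v = v ⊗ₜ[k] γ X.cls := by
  obtain ⟨ι, U, hU, hi, ht⟩ := hC C _ comul_isComod
  obtain ⟨p, hp, hs⟩ := projs (fun i => (hU i).1) hi ht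
  obtain ⟨χ, hχ⟩ := glue (N := fun _ => N) hi ht
    (fun i => (LinearMap.toSpanSingleton k N (γ (subS comul_isComod (hU i)).cls)) ∘ₗ
      Coalgebra.counit (R := k) (A := C) ∘ₗ (U i).subtype)
  refine ⟨χ, fun X v => sep_left fun f => ?_⟩
  rw [coef_cores]
  have h1 := counit_coefHom X.isComod f v
  have h2 := coefHom_hom X.isComod f
  obtain ⟨s, hs⟩ := hs (coefHom X.ρ f v)
  simp only [LinearMap.rTensor_tmul, lid_tmul]
  rw [← h1, hs, map_sum, map_sum, Finset.sum_smul]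
  refine Finset.sum_congr rfl fun i _ => ?_
  rw [hχ]
  simp only [LinearMap.comp_apply, LinearMap.toSpanSingleton_apply, Submodule.subtype_apply]
  by_cases h0 : p i ∘ₗ coefHom X.ρ f = 0
  · have : p i (coefHom X.ρ f v) = 0 := LinearMap.congr_fun h0 v
    simp [this]
  · rw [cls_eq_of_hom (Y := subS comul_isComod (hU i)) _ h0 (hom_comp h2 (hp i))]

theorem cores_hom {N : Type u} [AddCommGroup N] [Module k N] {χ : C →ₗ[k] N} {f : V →ₗ[k] W}
    (h : IsComodHom k C ρV ρW f) (v : V) :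
    cores k C χ ρW (f v) = f.rTensor N (cores k C χ ρV v) := by
  simp only [cores, LinearMap.comp_apply, hom_apply h]
  rw [← LinearMap.comp_apply, LinearMap.lTensor_comp_rTensor, ← LinearMap.rTensor_comp_lTensor]
  rfl

theorem cores_all (hC : IsCosemisimple k C) {N : Type u} [AddCommGroup N] [Module k N]
    {χ : C →ₗ[k] N} {g : N} (hV : IsComod k C ρV)
    (H : ∀ (X : SimpleComodule k C) (f : X.V →ₗ[k] V), f ≠ 0 → IsComodHom k C X.ρ ρV f →
      ∀ x, cores k C χ X.ρ x = x ⊗ₜ g) (v : V) : cores k C χ ρV v = v ⊗ₜ g := by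
  obtain ⟨ι, U, hU, hi, ht⟩ := hC V _ hV
  have : v ∈ ⨆ i, U i := ht ▸ trivial
  induction this using Submodule.iSup_induction' with
  | zero => simp
  | add x y _ _ hx hy => simp only [map_add, add_tmul, hx, hy]
  | mem j x hx =>
    have h1 := cores_hom (χ := χ) (resC_hom (hU j).1) ⟨x, hx⟩
    have h0 : (U j).subtype ≠ 0 := by
      intro h
      apply (hU j).2.1
      have := LinearMap.range_eq_bot.2 h
      rwa [Submodule.range_subtype] at this
    have h2 := H (subS hV (hU j)) (U j).subtype h0 (resC_hom (hU j).1) ⟨x, hx⟩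
    have h1' := h1.trans (congrArg _ h2)
    exact h1'

/-- On a subcomodule of `C`, a central character gives the values of `χ`. -/
theorem chi_val {N : Type u} [AddCommGroup N] [Module k N] {χ : C →ₗ[k] N} {g : N} {x : C}
    (h : cores k C χ (Coalgebra.comul (R := k) (A := C)) x = x ⊗ₜ g) :
    χ x = Coalgebra.counit (R := k) x • g := by
  have h1 := congrArg (fun t => TensorProduct.lid k N
    ((Coalgebra.counit (R := k) (A := C)).rTensor N t)) h
  rw [coef_cores] at h1
  have : coefHom (Coalgebra.comul (R := k) (A := C)) (Coalgebra.counit (R := k) (A := C)) x = x := by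
    simp [coefHom]
  rw [this] at h1
  simpa using h1

/-- Induction principle: to prove a linear identity on `C`, check simple subcomodules. -/
theorem cind (hC : IsCosemisimple k C) {P : C → Prop} (h0 : P 0)
    (hadd : ∀ x y, P x → P y → P (x + y))
    (H : ∀ (X : SimpleComodule k C) (f : X.V →ₗ[k] C),
      IsComodHom k C X.ρ (Coalgebra.comul (R := k) (A := C)) f → ∀ v, P (f v)) (x : C) : P x := by
  obtain ⟨ι, U, hU, hi, ht⟩ := hC C _ comul_isComod
  have : x ∈ ⨆ i, U i := ht ▸ trivial
  induction this using Submodule.iSup_induction' with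
  | zero => exact h0
  | add x y _ _ hx hy => exact hadd _ _ hx hy
  | mem j x hx =>
    exact H (subS comul_isComod (hU j)) (U j).subtype (resC_hom (hU j).1) ⟨x, hx⟩

theorem chi_apply {N : Type u} [AddCommGroup N] [Module k N] {χ : C →ₗ[k] N} {g : N}
    {X : SimpleComodule k C} {f : X.V →ₗ[k] C} (hg : HasCentralChar k C χ X g)
    (hf : IsComodHom k C X.ρ (Coalgebra.comul (R := k) (A := C)) f) (v : X.V) :
    cores k C χ (Coalgebra.comul (R := k) (A := C)) (f v) = f v ⊗ₜ g := by
  rw [cores_hom hf, hg v]; simp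

theorem chi_apply' {N : Type u} [AddCommGroup N] [Module k N] {χ : C →ₗ[k] N} {g : N}
    {X : SimpleComodule k C} {f : X.V →ₗ[k] C} (hg : HasCentralChar k C χ X g)
    (hf : IsComodHom k C X.ρ (Coalgebra.comul (R := k) (A := C)) f) (v : X.V) :
    χ (f v) = Coalgebra.counit (R := k) (f v) • g := chi_val (chi_apply hg hf v)

theorem X_ne (X : SimpleComodule k C) : ∃ v : X.V, v ≠ 0 := by
  by_contra! h
  apply X.isSimple.2.1
  rw [eq_bot_iff]
  intro x _
  simp [h x]

theorem X_func (X : SimpleComodule k C) : ∃ (v : X.V) (f : X.V →ₗ[k] k), f v = 1 := by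
  obtain ⟨v, hv⟩ := X_ne X
  obtain ⟨f, hf⟩ := Module.Projective.exists_dual_eq_one k hv
  exact ⟨v, f, hf⟩

/-- the value of a central character lies in the image of `χ` -/
theorem chi_mem {N : Type u} [AddCommGroup N] [Module k N] {χ : C →ₗ[k] N} {g : N}
    {X : SimpleComodule k C} (hg : HasCentralChar k C χ X g) :
    ∃ (v : X.V) (f : X.V →ₗ[k] C), IsComodHom k C X.ρ (Coalgebra.comul (R := k) (A := C)) f ∧
    Coalgebra.counit (R := k) (f v) = 1 ∧ χ (f v) = g := by
  obtain ⟨v, f, hf⟩ := X_func X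
  refine ⟨v, coefHom X.ρ f, coefHom_hom X.isComod f, ?_, ?_⟩
  · rw [counit_coefHom X.isComod, hf]
  · rw [chi_apply' hg (coefHom_hom X.isComod f), counit_coefHom X.isComod, hf, one_smul]

theorem tmul_left_cancel {N : Type u} [AddCommGroup N] [Module k N] {v : V} (hv : v ≠ 0)
    {a b : N} (h : v ⊗ₜ[k] a = v ⊗ₜ[k] b) : a = b := by
  obtain ⟨f, hf⟩ := Module.Projective.exists_dual_eq_one k hv
  have := congrArg (fun t => TensorProduct.lid k N (f.rTensor N t)) h
  simpa [hf] using this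

end S2
end QG

namespace QG
section S3
set_option linter.unusedSectionVars false
variable {k : Type u} [Field k]
variable {C : Type u} [AddCommGroup C] [Module k C] [Coalgebra k C]
variable {V W X : Type u} [AddCommGroup V] [Module k V] [AddCommGroup W] [Module k W]
  [AddCommGroup X] [Module k X]
variable {ρV : V →ₗ[k] V ⊗[k] C} {ρW : W →ₗ[k] W ⊗[k] C} {ρX : X →ₗ[k] X ⊗[k] C}

noncomputable def Lop (ρ : V →ₗ[k] V ⊗[k] C) (φ : C →ₗ[k] k) : V →ₗ[k] V :=
  (TensorProduct.rid k V).toLinearMap ∘ₗ φ.lTensor V ∘ₗ ρ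

noncomputable def Tr (φ : C →ₗ[k] k) : C →ₗ[k] C :=
  (TensorProduct.rid k C).toLinearMap ∘ₗ φ.lTensor C ∘ₗ Coalgebra.comul (R := k) (A := C)

noncomputable def Tl (φ : C →ₗ[k] k) : C →ₗ[k] C :=
  (TensorProduct.lid k C).toLinearMap ∘ₗ φ.rTensor C ∘ₗ Coalgebra.comul (R := k) (A := C)

theorem Lop_r (hV : IsComod k C ρV) (φ : C →ₗ[k] k) (v : V) :
    ρV (Lop ρV φ v) = (Tr φ).lTensor V (ρV v) := by
  have h := hV.coassoc v
  have e1 : ∀ t : V ⊗[k] C, ρV (TensorProduct.rid k V (φ.lTensor V t)) =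
      TensorProduct.rid k (V ⊗[k] C) (φ.lTensor (V ⊗[k] C) (ρV.rTensor C t)) := by
    intro t
    induction t with
    | zero => simp
    | add a b ha hb => simp only [map_add, ha, hb]
    | tmul a b => simp
  have e2 : ∀ t : V ⊗[k] C, TensorProduct.rid k (V ⊗[k] C) (φ.lTensor (V ⊗[k] C)
      ((TensorProduct.assoc k V C C).symm.toLinearMap
        ((Coalgebra.comul (R := k) (A := C)).lTensor V t))) = (Tr φ).lTensor V t := by
    intro t
    induction t with
    | zero => simp
    | add a b ha hb => simp only [map_add, ha, hb]
    | tmul a b =>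
      simp only [Tr, LinearMap.lTensor_tmul, LinearMap.comp_apply]
      induction Coalgebra.comul (R := k) b with
      | zero => simp
      | add a b ha hb => simp only [tmul_add, map_add, ha, hb]
      | tmul a b => simp
  calc ρV (Lop ρV φ v) = _ := e1 (ρV v)
    _ = _ := by rw [h, e2]

theorem Lop_l (hV : IsComod k C ρV) (φ : C →ₗ[k] k) (v : V) :
    (Lop ρV φ).rTensor C (ρV v) = (Tl φ).lTensor V (ρV v) := by
  have h := hV.coassoc v
  have e2 : ∀ t : V ⊗[k] C,
      ((TensorProduct.rid k V).toLinearMap ∘ₗ φ.lTensor V).rTensor C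
      ((TensorProduct.assoc k V C C).symm.toLinearMap
        ((Coalgebra.comul (R := k) (A := C)).lTensor V t)) = (Tl φ).lTensor V t := by
    intro t
    induction t with
    | zero => simp
    | add a b ha hb => simp only [map_add, ha, hb]
    | tmul a b =>
      simp only [Tl, LinearMap.lTensor_tmul, LinearMap.comp_apply]
      induction Coalgebra.comul (R := k) b with
      | zero => simp
      | add a b ha hb => simp only [tmul_add, map_add, ha, hb]
      | tmul a b => simp [smul_tmul]
  rw [← e2, ← h, ← LinearMap.rTensor_comp_apply]
  rfl

theorem mem_range_of {E : Submodule k V} {t : V ⊗[k] C}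
    (h : ∀ φ : C →ₗ[k] k, TensorProduct.rid k V (φ.lTensor V t) ∈ E) :
    t ∈ LinearMap.range (E.subtype.rTensor C) := by
  have e : Function.Exact E.subtype E.mkQ := LinearMap.exact_subtype_mkQ E
  have := Module.Flat.rTensor_exact (R := k) C e
  apply (this _).1
  apply sep_right
  intro φ
  have e1 : ∀ t : V ⊗[k] C, TensorProduct.rid k (V ⧸ E) (φ.lTensor _ (E.mkQ.rTensor C t)) =
      E.mkQ (TensorProduct.rid k V (φ.lTensor V t)) := by
    intro t
    induction t with
    | zero => simp
    | add a b ha hb => simp only [map_add, ha, hb]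
    | tmul a b => simp
  rw [e1]
  simpa using h φ

theorem simple_finite (hV : IsComod k C ρV) (hs : IsSimpleComod k C ρV) :
    Module.Finite k V := by
  obtain ⟨v, hv⟩ := X_ne ⟨V, ρV, hV, hs⟩
  change V at v
  let F : (C →ₗ[k] k) →ₗ[k] V :=
    { toFun := fun φ => Lop ρV φ v
      map_add' := by intro a b; simp [Lop, LinearMap.lTensor_add]
      map_smul' := by intro a b; simp [Lop, LinearMap.lTensor_smul] }
  have hF : ∀ φ, F φ = Lop ρV φ v := fun _ => rfl
  have hvF : v ∈ LinearMap.range F := ⟨Coalgebra.counit, hV.counit v⟩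
  have hsub : IsSubcomod k C ρV (LinearMap.range F) := by
    rintro _ ⟨φ, rfl⟩
    rw [hF, Lop_r hV]
    obtain ⟨s, hs⟩ := mem_range_of (E := LinearMap.range F) (t := ρV v) (fun φ => ⟨φ, rfl⟩)
    rw [← hs]
    refine ⟨(Tr φ).lTensor _ s, ?_⟩
    rw [← LinearMap.comp_apply, ← LinearMap.comp_apply, LinearMap.rTensor_comp_lTensor,
      LinearMap.lTensor_comp_rTensor]
  have htop : LinearMap.range F = ⊤ := by
    rcases hs.2.2 _ le_top hsub with h | h
    · rw [h] at hvF
      exact (hv (by simpa using hvF)).elim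
    · exact h
  have hfg : ∀ t : V ⊗[k] C, ∃ E : Submodule k V, E.FG ∧
      ∀ φ : C →ₗ[k] k, TensorProduct.rid k V (φ.lTensor V t) ∈ E := by
    intro t
    induction t with
    | zero => exact ⟨⊥, Submodule.fg_bot, by simp⟩
    | add a b ha hb =>
      obtain ⟨E, hE, h1⟩ := ha
      obtain ⟨E', hE', h2⟩ := hb
      refine ⟨E ⊔ E', hE.sup hE', fun φ => ?_⟩
      rw [map_add, map_add]
      exact Submodule.add_mem_sup (h1 φ) (h2 φ)
    | tmul a b =>
      refine ⟨Submodule.span k {a}, Submodule.fg_span_singleton a, fun φ => ?_⟩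
      simp only [LinearMap.lTensor_tmul, rid_tmul]
      exact Submodule.smul_mem _ _ (Submodule.mem_span_singleton_self a)
  obtain ⟨E, hE, h1⟩ := hfg (ρV v)
  have hEt : E = ⊤ := by
    rw [eq_top_iff, ← htop]
    rintro _ ⟨φ, rfl⟩
    exact h1 φ
  exact ⟨hEt ▸ hE⟩

theorem exists_central [IsAlgClosed k] {Z : Type u} [AddCommGroup Z] [Module k Z] (ζ : C →ₗ[k] Z)
    (hζ : IsCentralMap k C ζ) (X : SimpleComodule k C) : ∃ g : Z, HasCentralChar k C ζ X g := by
  have hT : ∀ ψ : Z →ₗ[k] k, Tr (ψ ∘ₗ ζ) = Tl (ψ ∘ₗ ζ) := by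
    intro ψ
    ext x
    have h := congrArg (fun t => TensorProduct.lid k C (ψ.rTensor C t)) (LinearMap.congr_fun hζ x)
    have e : ∀ t : C ⊗[k] C, TensorProduct.lid k C (ψ.rTensor C (ζ.rTensor C
        (TensorProduct.comm k C C t))) = TensorProduct.rid k C ((ψ ∘ₗ ζ).lTensor C t) := by
      intro t
      induction t with
      | zero => simp
      | add a b ha hb => simp only [map_add, ha, hb]
      | tmul a b => simp
    simp only [LinearMap.comp_apply, LinearEquiv.coe_coe] at h
    rw [e, ← LinearMap.rTensor_comp_apply] at h
    exact h.symm
  have hfin := simple_finite X.isComod X.isSimple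
  obtain ⟨v0, f, hf⟩ := X_func X
  have hv0 : v0 ≠ 0 := by rintro rfl; simp at hf
  have : Nontrivial X.V := ⟨v0, 0, hv0⟩
  have key : ∀ ψ : Z →ₗ[k] k, ∃ c : k, ∀ v, Lop X.ρ (ψ ∘ₗ ζ) v = c • v := by
    intro ψ
    obtain ⟨c, hc⟩ := Module.End.exists_eigenvalue (K := k) (Lop X.ρ (ψ ∘ₗ ζ))
    obtain ⟨w, hw⟩ := hc.exists_hasEigenvector
    refine ⟨c, ?_⟩
    have hh : IsComodHom k C X.ρ X.ρ (Lop X.ρ (ψ ∘ₗ ζ) - c • LinearMap.id) := by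
      ext v
      simp only [LinearMap.comp_apply, LinearMap.sub_apply, LinearMap.rTensor_sub, map_sub,
        LinearMap.rTensor_smul, LinearMap.smul_apply, map_smul]
      rw [Lop_r X.isComod, Lop_l X.isComod, hT]
      simp
    by_contra hcon
    have h0 : Lop X.ρ (ψ ∘ₗ ζ) - c • LinearMap.id ≠ 0 := by
      intro h
      apply hcon
      intro v
      have := LinearMap.congr_fun h v
      simpa [sub_eq_zero] using this
    have hi := schur_inj hh X.isSimple h0
    apply hw.2
    apply hi
    simp [hw.apply_eq_smul]
  have hL : ∀ (ψ : Z →ₗ[k] k) v, TensorProduct.rid k X.V (ψ.lTensor X.V (cores k C ζ X.ρ v)) =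
      Lop X.ρ (ψ ∘ₗ ζ) v := by
    intro ψ v
    simp [cores, Lop, LinearMap.lTensor_comp_apply]
  refine ⟨TensorProduct.lid k Z (f.rTensor Z (cores k C ζ X.ρ v0)), fun v => sep_right fun ψ => ?_⟩
  have e : ∀ t : X.V ⊗[k] Z, ψ (TensorProduct.lid k Z (f.rTensor Z t)) =
      f (TensorProduct.rid k X.V (ψ.lTensor X.V t)) := by
    intro t
    induction t with
    | zero => simp
    | add a b ha hb => simp only [map_add, ha, hb]
    | tmul a b => simp [mul_comm]
  obtain ⟨c, hc⟩ := key ψ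
  rw [hL, hc]
  simp only [LinearMap.lTensor_tmul, rid_tmul]
  rw [e, hL, hc]
  simp [hf]

theorem cores_isComod {D : Type u} [AddCommGroup D] [Module k D] [Coalgebra k D]
    (π : C →ₗ[k] D) (h1 : Coalgebra.counit ∘ₗ π = Coalgebra.counit)
    (h2 : TensorProduct.map π π ∘ₗ Coalgebra.comul = Coalgebra.comul ∘ₗ π)
    (hV : IsComod k C ρV) : IsComod k D (cores k C π ρV) := by
  constructor
  · intro v
    have h := hV.coassoc v
    have e1 : ∀ t : V ⊗[k] C, (cores k C π ρV).rTensor D (π.lTensor V t) =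
        TensorProduct.map (π.lTensor V) π (ρV.rTensor C t) := by
      intro t
      induction t with
      | zero => simp
      | add a b ha hb => simp only [map_add, ha, hb]
      | tmul a b => simp [cores]
    have e2 : ∀ t : V ⊗[k] C, TensorProduct.map (π.lTensor V) π
        ((TensorProduct.assoc k V C C).symm.toLinearMap
        ((Coalgebra.comul (R := k) (A := C)).lTensor V t)) =
        (TensorProduct.assoc k V D D).symm.toLinearMap
        ((Coalgebra.comul (R := k) (A := D)).lTensor V (π.lTensor V t)) := by
      intro t
      induction t with
      | zero => simp
      | add a b ha hb => simp only [map_add, ha, hb]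
      | tmul a b =>
        have := LinearMap.congr_fun h2 b
        simp only [LinearMap.comp_apply] at this
        simp only [LinearMap.lTensor_tmul, ← this]
        induction Coalgebra.comul (R := k) b with
        | zero => simp
        | add a b ha hb => simp only [tmul_add, map_add, ha, hb]
        | tmul a b => simp
    calc _ = _ := e1 (ρV v)
      _ = _ := by rw [h, e2]; rfl
  · intro v
    simp only [cores, LinearMap.comp_apply]
    rw [← LinearMap.lTensor_comp_apply, h1]
    exact hV.counit v

theorem cores_isHom {D : Type u} [AddCommGroup D] [Module k D] 
    (π : C →ₗ[k] D) {f : V →ₗ[k] W} (h : IsComodHom k C ρV ρW f) :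
    IsComodHom k D (cores k C π ρV) (cores k C π ρW) f := by
  ext v
  exact cores_hom h v

end S3

section S4
set_option linter.unusedSectionVars false
variable {k : Type u} [Field k]
variable {H : Type u} [Ring H] [Bialgebra k H]
variable {V W X Y : Type u} [AddCommGroup V] [Module k V] [AddCommGroup W] [Module k W]
  [AddCommGroup X] [Module k X] [AddCommGroup Y] [Module k Y]
variable {ρV : V →ₗ[k] V ⊗[k] H} {ρW : W →ₗ[k] W ⊗[k] H} {ρX : X →ₗ[k] X ⊗[k] H}
   {ρY : Y →ₗ[k] Y ⊗[k] H}

noncomputable def TT (V W H : Type u) [AddCommGroup V] [Module k V] [AddCommGroup W] [Module k W]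
    [Ring H] [Algebra k H] : (V ⊗[k] H) ⊗[k] (W ⊗[k] H) →ₗ[k] (V ⊗[k] W) ⊗[k] H :=
  ((LinearMap.mul' k H).lTensor (V ⊗[k] W)) ∘ₗ
    (TensorProduct.tensorTensorTensorComm k V H W H).toLinearMap

@[simp] theorem TT_tmul (v : V) (w : W) (a b : H) :
    TT (k := k) V W H ((v ⊗ₜ a) ⊗ₜ (w ⊗ₜ b)) = (v ⊗ₜ w) ⊗ₜ (a * b) := by
  simp [TT]

theorem tensorCoact_tmul (v : V) (w : W) :
    tensorCoact k H ρV ρW (v ⊗ₜ w) = TT V W H (ρV v ⊗ₜ ρW w) := by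
  simp [TT, tensorCoact]

theorem ind2 {M N P Q R : Type u} [AddCommMonoid M] [Module k M] [AddCommMonoid N] [Module k N]
    [AddCommMonoid P] [Module k P] [AddCommMonoid Q] [Module k Q] [AddCommMonoid R] [Module k R]
    (f g : (M ⊗[k] N) ⊗[k] (P ⊗[k] Q) →ₗ[k] R)
    (h : ∀ m n p q, f ((m ⊗ₜ n) ⊗ₜ (p ⊗ₜ q)) = g ((m ⊗ₜ n) ⊗ₜ (p ⊗ₜ q))) : f = g := by
  ext m n p q
  exact h m n p q

noncomputable def FF (V W H : Type u) [AddCommGroup V] [Module k V] [AddCommGroup W] [Module k W]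
    [Ring H] [Algebra k H] :
    ((V ⊗[k] H) ⊗[k] H) ⊗[k] ((W ⊗[k] H) ⊗[k] H) →ₗ[k] ((V ⊗[k] W) ⊗[k] H) ⊗[k] H :=
  ((TT V W H).rTensor H) ∘ₗ TT (V ⊗[k] H) (W ⊗[k] H) H

theorem tensor_isComod (hV : IsComod k H ρV) (hW : IsComod k H ρW) :
    IsComod k H (tensorCoact k H ρV ρW) := by
  constructor
  · intro z
    induction z with
    | zero => simp
    | add a b ha hb => simp only [map_add, ha, hb]
    | tmul v w =>
      have e1 : (tensorCoact k H ρV ρW).rTensor H ∘ₗ TT V W H =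
          FF V W H ∘ₗ TensorProduct.map (ρV.rTensor H) (ρW.rTensor H) := by
        apply ind2
        intro m n p q
        simp [FF, tensorCoact_tmul]
      have e2 : (TensorProduct.assoc k (V ⊗[k] W) H H).symm.toLinearMap ∘ₗ
          (Coalgebra.comul (R := k) (A := H)).lTensor (V ⊗[k] W) ∘ₗ TT V W H =
          FF V W H ∘ₗ TensorProduct.map
            ((TensorProduct.assoc k V H H).symm.toLinearMap ∘ₗ
              (Coalgebra.comul (R := k) (A := H)).lTensor V)
            ((TensorProduct.assoc k W H H).symm.toLinearMap ∘ₗ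
              (Coalgebra.comul (R := k) (A := H)).lTensor W) := by
        apply ind2
        intro m n p q
        simp only [LinearMap.comp_apply, TT_tmul, LinearMap.lTensor_tmul, Bialgebra.comul_mul,
          map_tmul]
        induction Coalgebra.comul (R := k) n with
        | zero => simp
        | add a b ha hb => simp only [add_mul, tmul_add, map_add, add_tmul, ha, hb]
        | tmul a b =>
          induction Coalgebra.comul (R := k) q with
          | zero => simp
          | add a b ha hb => simp only [mul_add, tmul_add, map_add, ha, hb]
          | tmul c d => simp [FF]
      rw [tensorCoact_tmul]
      have f1 := LinearMap.congr_fun e1 (ρV v ⊗ₜ ρW w)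
      have f2 := LinearMap.congr_fun e2 (ρV v ⊗ₜ ρW w)
      simp only [LinearMap.comp_apply, map_tmul] at f1 f2
      rw [f1, f2, hV.coassoc, hW.coassoc]
  · intro z
    induction z with
    | zero => simp
    | add a b ha hb => simp only [map_add, ha, hb]
    | tmul v w =>
      have e : (TensorProduct.rid k (V ⊗[k] W)).toLinearMap ∘ₗ
          (Coalgebra.counit (R := k) (A := H)).lTensor (V ⊗[k] W) ∘ₗ TT V W H =
        TensorProduct.map ((TensorProduct.rid k V).toLinearMap ∘ₗ
          (Coalgebra.counit (R := k) (A := H)).lTensor V)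
          ((TensorProduct.rid k W).toLinearMap ∘ₗ
          (Coalgebra.counit (R := k) (A := H)).lTensor W) := by
        apply ind2
        intro m n p q
        simp [smul_tmul', tmul_smul, smul_smul, mul_comm]
      have f := LinearMap.congr_fun e (ρV v ⊗ₜ ρW w)
      simp only [LinearMap.comp_apply, map_tmul, LinearEquiv.coe_coe] at f
      rw [tensorCoact_tmul, f, hV.counit, hW.counit]

theorem tensor_hom {f : V →ₗ[k] X} {g : W →ₗ[k] Y} (hf : IsComodHom k H ρV ρX f)
    (hg : IsComodHom k H ρW ρY g) : IsComodHom k H (tensorCoact k H ρV ρW) (tensorCoact k H ρX ρY)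
      (TensorProduct.map f g) := by
  apply TensorProduct.ext'
  intro v w
  simp only [LinearMap.comp_apply, map_tmul, tensorCoact_tmul, hom_apply hf, hom_apply hg]
  have e : TT X Y H ∘ₗ TensorProduct.map (f.rTensor H) (g.rTensor H) =
      (TensorProduct.map f g).rTensor H ∘ₗ TT V W H := by
    apply ind2
    intro m n p q
    simp
  exact LinearMap.congr_fun e (ρV v ⊗ₜ ρW w)

theorem cores_tensor {B : Type u} [Ring B] [Bialgebra k B] (χ : H →ₐ[k] B) :
    cores k H χ.toLinearMap (tensorCoact k H ρV ρW) =
      tensorCoact k B (cores k H χ.toLinearMap ρV) (cores k H χ.toLinearMap ρW) := by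
  apply TensorProduct.ext'
  intro v w
  have e : χ.toLinearMap.lTensor (V ⊗[k] W) ∘ₗ TT V W H =
      TT V W B ∘ₗ TensorProduct.map (χ.toLinearMap.lTensor V) (χ.toLinearMap.lTensor W) := by
    apply ind2
    intro m n p q
    simp
  simp only [cores, LinearMap.comp_apply, tensorCoact_tmul]
  exact LinearMap.congr_fun e (ρV v ⊗ₜ ρW w)

theorem mul_hom : IsComodHom k H (tensorCoact k H (Coalgebra.comul (R := k) (A := H))
    (Coalgebra.comul (R := k) (A := H))) (Coalgebra.comul (R := k) (A := H))
    (LinearMap.mul' k H) := by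
  apply TensorProduct.ext'
  intro v w
  have e : (LinearMap.mul' k H).rTensor H ∘ₗ TT H H H = LinearMap.mul' k (H ⊗[k] H) := by
    apply ind2
    intro m n p q
    simp
  simp only [LinearMap.comp_apply, tensorCoact_tmul, LinearMap.mul'_apply, Bialgebra.comul_mul]
  have := LinearMap.congr_fun e (Coalgebra.comul (R := k) v ⊗ₜ Coalgebra.comul (R := k) w)
  simp only [LinearMap.comp_apply, LinearMap.mul'_apply] at this
  exact this.symm

end S4
end QG

namespace QG
section S5
variable {k : Type u} [Field k]

theorem central_of {C : Type u} [AddCommGroup C] [Module k C] [Coalgebra k C]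
    (hC : IsCosemisimple k C) {N : Type u} [AddCommGroup N] [Module k N]
    {χ : C →ₗ[k] N} (γ : SimpleComodule k C → N) (h : ∀ X, HasCentralChar k C χ X (γ X)) :
    IsCentralMap k C χ := by
  apply LinearMap.ext
  intro x
  induction x using cind hC with
  | h0 => simp
  | hadd x y hx hy => simp only [map_add, hx, hy]
  | H X f hf v =>
    have e : ∀ t : C ⊗[k] C, χ.rTensor C (TensorProduct.comm k C C t) =
      TensorProduct.comm k C N (χ.lTensor C t) := by
      intro t
      induction t with
      | zero => simp
      | add a b ha hb => simp only [map_add, ha, hb]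
      | tmul a b => simp
    have h1 : χ.lTensor C (Coalgebra.comul (R := k) (f v)) = f v ⊗ₜ γ X := chi_apply (h X) hf v
    have h2 : χ ∘ₗ f = (LinearMap.toSpanSingleton k N (γ X) ∘ₗ Coalgebra.counit) ∘ₗ f := by
      ext w
      simpa using chi_apply' (h X) hf w
    simp only [LinearMap.comp_apply, LinearEquiv.coe_coe]
    rw [e, h1, hom_apply hf, ← LinearMap.rTensor_comp_apply, h2, LinearMap.rTensor_comp_apply,
      ← hom_apply hf, LinearMap.rTensor_comp_apply]
    simp

variable {D : Type u} [Ring D] [HopfAlgebra k D]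

noncomputable def trivS (k : Type u) [Field k] (D : Type u) [Ring D] [HopfAlgebra k D] :
    SimpleComodule k D where
  V := k
  ρ := (TensorProduct.mk k k D).flip 1
  isComod := by
    constructor
    · intro v; simp [Algebra.TensorProduct.one_def]
    · intro v; simp
  isSimple := by
    refine ⟨?_, ?_, ?_⟩
    · intro u _
      refine ⟨(⟨u, trivial⟩ : (⊤ : Submodule k k)) ⊗ₜ 1, by simp⟩
    · exact top_ne_bot
    · intro U' _ _
      exact eq_bot_or_eq_top U'

theorem triv_hom1 : IsComodHom k D ((TensorProduct.mk k k D).flip 1)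
    (tensorCoact k D ((TensorProduct.mk k k D).flip 1) ((TensorProduct.mk k k D).flip 1))
    (TensorProduct.lid k k).symm.toLinearMap := by
  apply LinearMap.ext_ring
  simp [tensorCoact]

theorem triv_hom2 : IsComodHom k D ((TensorProduct.mk k k D).flip 1)
    (Coalgebra.comul (R := k) (A := D)) (Algebra.linearMap k D) := by
  apply LinearMap.ext_ring
  simp [Algebra.TensorProduct.one_def]

theorem triv_ne : (TensorProduct.lid k k).symm.toLinearMap ≠ 0 := by
  intro h0
  have := congrArg (TensorProduct.lid k k) (LinearMap.congr_fun h0 (1 : k))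
  simp at this

theorem exists_bialg (hD : IsCosemisimple k D) {M : Type u} [Group M]
    (γ : SimpleComodQuot k D → M)
    (hγ : ∀ (U V W : SimpleComodule k D) (f : U.V →ₗ[k] V.V ⊗[k] W.V), f ≠ 0 →
      IsComodHom k D U.ρ (tensorCoact k D V.ρ W.ρ) f → γ U.cls = γ V.cls * γ W.cls) :
    ∃ χ : D →ₐc[k] MonoidAlgebra k M, ∀ X : SimpleComodule k D,
      HasCentralChar k D (χ : D →ₗ[k] MonoidAlgebra k M) X (MonoidAlgebra.single (γ X.cls) 1) := by
  obtain ⟨χ, hχ⟩ := exists_chi hD (fun x => (MonoidAlgebra.single (γ x) 1 : MonoidAlgebra k M))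
  have hχ' : ∀ X : SimpleComodule k D,
      HasCentralChar k D χ X (MonoidAlgebra.single (γ X.cls) 1) := hχ
  have ht : γ (trivS k D).cls = 1 := by
    have h := hγ (trivS k D) (trivS k D) (trivS k D) (TensorProduct.lid k k).symm.toLinearMap
      triv_ne triv_hom1
    simpa using h
  have h1 : χ 1 = 1 := by
    have : χ (Algebra.linearMap k D 1) = _ := chi_apply' (hχ' (trivS k D)) triv_hom2 (1 : k)
    rw [ht] at this
    have e : Coalgebra.counit (R := k) (Algebra.linearMap k D 1) = 1 := by simp
    have e' := this.trans (congrArg (fun c : k => c • (MonoidAlgebra.single 1 1 : MonoidAlgebra k M)) e)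
    simpa [MonoidAlgebra.one_def] using e'
  have hm : ∀ x y, χ (x * y) = χ x * χ y := by
    intro x y
    induction x using cind hD with
    | h0 => simp
    | hadd x x' hx hx' => simp only [add_mul, map_add, hx, hx']
    | H X f hf v =>
      induction y using cind hD with
      | h0 => simp
      | hadd x x' hx hx' => simp only [mul_add, map_add, hx, hx']
      | H Y g hg w =>
        have h1 := cores_all hD (χ := χ) (g := MonoidAlgebra.single (γ X.cls * γ Y.cls) (1 : k))
          (tensor_isComod X.isComod Y.isComod)
          (fun U f h0 hf x => by rw [hχ, hγ U X Y f h0 hf]) (v ⊗ₜ w)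
        have h2 := cores_hom (χ := χ) (hom_comp (tensor_hom hf hg) mul_hom) (v ⊗ₜ[k] w)
        rw [h1] at h2
        simp only [LinearMap.comp_apply, map_tmul, LinearMap.mul'_apply, LinearMap.rTensor_tmul]
          at h2
        rw [chi_val h2, chi_apply' (hχ' X) hf, chi_apply' (hχ' Y) hg]
        simp [MonoidAlgebra.single_mul_single]
  have hcounit : ∀ x, Coalgebra.counit (R := k) (χ x) = Coalgebra.counit (R := k) x := by
    intro x
    induction x using cind hD with
    | h0 => simp
    | hadd x x' hx hx' => simp only [map_add, hx, hx']
    | H X f hf v =>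
      rw [chi_apply' (hχ' X) hf]
      simp
  have hcomul : ∀ x, TensorProduct.map χ χ (Coalgebra.comul (R := k) x) =
      Coalgebra.comul (R := k) (χ x) := by
    intro x
    induction x using cind hD with
    | h0 => simp
    | hadd x x' hx hx' => simp only [map_add, hx, hx']
    | H X f hf v =>
      have h2 : χ.lTensor D (Coalgebra.comul (R := k) (f v)) = _ := chi_apply (hχ' X) hf v
      rw [← LinearMap.rTensor_comp_lTensor, LinearMap.comp_apply, h2, LinearMap.rTensor_tmul,
        chi_apply' (hχ' X) hf]
      rw [map_smul, ← smul_tmul']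
      simp [-MonoidAlgebra.smul_single]
  refine ⟨BialgHom.ofAlgHom (AlgHom.ofLinearMap χ h1 hm) ?_ ?_, ?_⟩
  · ext x
    exact hcounit x
  · ext x
    exact hcomul x
  · intro X
    exact hχ' X

theorem small_quot_simple (k : Type u) [Field k] (C : Type u) [AddCommGroup C] [Module k C]
    [Coalgebra k C] : Small.{u} (SimpleComodQuot k C) := by
  let I := Σ n : ℕ, {ρ : (Fin n → k) →ₗ[k] (Fin n → k) ⊗[k] C //
    IsComod k C ρ ∧ IsSimpleComod k C ρ}
  let F : I → SimpleComodQuot k C := fun i =>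
    SimpleComodule.cls k C ⟨Fin i.1 → k, i.2.1, i.2.2.1, i.2.2.2⟩
  apply small_of_surjective (f := F)
  intro x
  obtain ⟨X, rfl⟩ := Quot.exists_rep x
  have := simple_finite X.isComod X.isSimple
  let b := Module.finBasis k X.V
  let e : X.V ≃ₗ[k] (Fin (Module.finrank k X.V) → k) := b.equivFun
  let ρ' := (e.toLinearMap.rTensor C) ∘ₗ X.ρ ∘ₗ e.symm.toLinearMap
  have h1 : IsComodHom k C X.ρ ρ' e.toLinearMap := by
    ext v
    simp [ρ']
  have h2 : IsComodHom k C ρ' X.ρ e.symm.toLinearMap := by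
    ext v
    simp only [ρ', LinearMap.comp_apply]
    rw [← LinearMap.rTensor_comp_apply]
    simp
  have h3 : IsComod k C ρ' := isComod_of_inj e.symm.injective h2 X.isComod
  have h4 : IsSimpleComod k C ρ' := by
    have hb : ∀ U : Submodule k (Fin (Module.finrank k X.V) → k), IsSubcomod k C ρ' U →
      IsSubcomod k C X.ρ (U.map e.symm.toLinearMap) := by
      intro U hU
      have := range_sub (hom_comp (resC_hom hU) h2)
      rwa [LinearMap.range_comp, Submodule.range_subtype] at this
    refine ⟨?_, ?_, ?_⟩
    · have := range_sub h1
      rwa [LinearEquiv.range] at this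
    · intro h
      apply X.isSimple.2.1
      have := congrArg (Submodule.map e.symm.toLinearMap) h
      simpa using this
    · intro U' _ hU'
      rcases X.isSimple.2.2 _ le_top (hb U' hU') with h | h
      · left
        have := congrArg (Submodule.map e.toLinearMap) h
        rw [← Submodule.map_comp] at this
        simpa using this
      · right
        have := congrArg (Submodule.map e.toLinearMap) h
        rw [← Submodule.map_comp] at this
        simpa using this
  refine ⟨⟨_, ρ', h3, h4⟩, ?_⟩
  exact Quot.sound ⟨e.symm, h2⟩

theorem small_presented {α : Type (u+1)} [Small.{u} α] (R : Set (FreeGroup α)) :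
    Small.{u} (PresentedGroup R) := by
  let F : FreeGroup (Shrink.{u} α) → PresentedGroup R := fun x =>
    PresentedGroup.mk R (FreeGroup.map (equivShrink α).symm x)
  apply small_of_surjective (f := F)
  intro y
  obtain ⟨x, rfl⟩ := PresentedGroup.mk_surjective R y
  refine ⟨FreeGroup.map (equivShrink α) x, ?_⟩
  simp only [F]
  rw [FreeGroup.map.comp]
  simp
end S5
end QG

namespace QG
section S6
variable {k : Type u} [Field k]

theorem cores_cores {C D N V : Type u} [AddCommGroup C] [Module k C] [Coalgebra k C]
    [AddCommGroup D] [Module k D] [Coalgebra k D] [AddCommGroup N] [Module k N]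
    [AddCommGroup V] [Module k V] (π : C →ₗ[k] D) (χ : D →ₗ[k] N) (ρ : V →ₗ[k] V ⊗[k] C) :
    cores k D χ (cores k C π ρ) = cores k C (χ ∘ₗ π) ρ := by
  ext v
  simp [cores, LinearMap.lTensor_comp_apply]

theorem char_comp {C N N' : Type u} [AddCommGroup C] [Module k C] [Coalgebra k C]
    [AddCommGroup N] [Module k N] [AddCommGroup N'] [Module k N'] {χ : C →ₗ[k] N}
    {X : SimpleComodule k C} {g : N} (h : HasCentralChar k C χ X g) (t : N →ₗ[k] N') :
    HasCentralChar k C (t ∘ₗ χ) X (t g) := by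
  intro v
  have := congrArg (t.lTensor X.V) (h v)
  simpa [cores, LinearMap.lTensor_comp_apply] using this

theorem char_unique {C N : Type u} [AddCommGroup C] [Module k C] [Coalgebra k C]
    [AddCommGroup N] [Module k N] {χ : C →ₗ[k] N}
    {X : SimpleComodule k C} {g g' : N} (h : HasCentralChar k C χ X g)
    (h' : HasCentralChar k C χ X g') : g = g' := by
  obtain ⟨v, hv⟩ := X_ne X
  exact tmul_left_cancel hv ((h v).symm.trans (h' v))

theorem char_grouplike {C N : Type u} [AddCommGroup C] [Module k C] [Coalgebra k C]
    [AddCommGroup N] [Module k N] [Coalgebra k N] {χ : C →ₗ[k] N}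
    (h1 : Coalgebra.counit ∘ₗ χ = Coalgebra.counit)
    (h2 : TensorProduct.map χ χ ∘ₗ Coalgebra.comul = Coalgebra.comul ∘ₗ χ)
    {X : SimpleComodule k C} {g : N} (h : HasCentralChar k C χ X g) : IsGroupLikeElem k g := by
  obtain ⟨v, f, hf, hv, hg⟩ := chi_mem h
  constructor
  · rw [← hg, ← hv, ← h1]; rfl
  · have e : χ.lTensor C (Coalgebra.comul (R := k) (f v)) = _ := chi_apply h hf v
    have := LinearMap.congr_fun h2 (f v)
    rw [LinearMap.comp_apply, LinearMap.comp_apply, ← LinearMap.rTensor_comp_lTensor,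
      LinearMap.comp_apply, e, LinearMap.rTensor_tmul, hg] at this
    exact this.symm

variable {G Hh : Type u} [Ring G] [HopfAlgebra k G] [Ring Hh] [HopfAlgebra k Hh]

theorem bialg_counit (π : G →ₐc[k] Hh) :
    Coalgebra.counit ∘ₗ (π : G →ₗ[k] Hh) = Coalgebra.counit := by
  ext x; simp

theorem bialg_comul (π : G →ₐc[k] Hh) :
    TensorProduct.map (π : G →ₗ[k] Hh) (π : G →ₗ[k] Hh) ∘ₗ Coalgebra.comul =
      Coalgebra.comul ∘ₗ (π : G →ₗ[k] Hh) := by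
  exact CoalgHomClass.map_comp_comul π

theorem cores_tensor' (π : G →ₐc[k] Hh) {V W : Type u} [AddCommGroup V] [Module k V]
    [AddCommGroup W] [Module k W] (ρV : V →ₗ[k] V ⊗[k] G) (ρW : W →ₗ[k] W ⊗[k] G) :
    cores k G (π : G →ₗ[k] Hh) (tensorCoact k G ρV ρW) =
      tensorCoact k Hh (cores k G (π : G →ₗ[k] Hh) ρV) (cores k G (π : G →ₗ[k] Hh) ρW) :=
  cores_tensor (π : G →ₐ[k] Hh)

theorem chain_rel (π : G →ₐc[k] Hh) (U V W : SimpleComodule k G)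
    (f : U.V →ₗ[k] V.V ⊗[k] W.V) (h0 : f ≠ 0)
    (hf : IsComodHom k Hh (cores k G (π : G →ₗ[k] Hh) U.ρ)
        (cores k G (π : G →ₗ[k] Hh) (tensorCoact k G V.ρ W.ρ)) f) :
    chainGen k G Hh π U.cls = chainGen k G Hh π V.cls * chainGen k G Hh π W.cls := by
  have h : FreeGroup.of U.cls * (FreeGroup.of V.cls * FreeGroup.of W.cls)⁻¹ ∈
      chainRels k G Hh π := ⟨U, V, W, ⟨f, h0, hf⟩, rfl⟩
  have := PresentedGroup.one_of_mem h
  rw [map_mul, map_inv, mul_inv_eq_one, map_mul] at this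
  exact this

/-- `T` is an `H`-quotient of `V`. -/
def RelQ (π : G →ₐc[k] Hh) (T : SimpleComodule k Hh) (V : SimpleComodule k G) : Prop :=
  ∃ f : V.V →ₗ[k] T.V, f ≠ 0 ∧ IsComodHom k Hh (cores k G (π : G →ₗ[k] Hh) V.ρ) T.ρ f

theorem resH (π : G →ₐc[k] Hh) (V : SimpleComodule k G) :
    IsComod k Hh (cores k G (π : G →ₗ[k] Hh) V.ρ) :=
  cores_isComod _ (bialg_counit π) (bialg_comul π) V.isComod

theorem pi_hom (π : G →ₐc[k] Hh) : IsComodHom k Hh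
    (cores k G (π : G →ₗ[k] Hh) (Coalgebra.comul (R := k) (A := G)))
    (Coalgebra.comul (R := k) (A := Hh)) (π : G →ₗ[k] Hh) := by
  unfold IsComodHom
  rw [← bialg_comul, cores, ← LinearMap.comp_assoc, LinearMap.rTensor_comp_lTensor]

theorem exists_RelQ (π : G →ₐc[k] Hh) (hsurj : Function.Surjective π)
    (hG : IsCosemisimple k G) (hH : IsCosemisimple k Hh) (T : SimpleComodule k Hh) :
    ∃ V, RelQ π T V := by
  obtain ⟨v, f, hf⟩ := X_func T
  have h0 : coefHom T.ρ f ≠ 0 := by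
    intro h
    have := counit_coefHom T.isComod f v
    rw [h, hf] at this
    simp at this
  obtain ⟨q, hq0, hq⟩ := rev1 hH comul_isComod T.isSimple _ h0 (coefHom_hom T.isComod f)
  have h1 : q ∘ₗ (π : G →ₗ[k] Hh) ≠ 0 := by
    intro h
    apply hq0
    ext x
    obtain ⟨y, rfl⟩ := hsurj x
    exact LinearMap.congr_fun h y
  obtain ⟨U, hU, hne⟩ := exists_sub hG comul_isComod _ h1
  exact ⟨subS comul_isComod hU, _, hne,
    hom_comp (cores_isHom _ (resC_hom hU.1)) (hom_comp (pi_hom π) hq)⟩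

theorem chain_triv (π : G →ₐc[k] Hh) : chainGen k G Hh π (trivS k G).cls = 1 := by
  have := chain_rel π (trivS k G) (trivS k G) (trivS k G)
    (TensorProduct.lid k k).symm.toLinearMap triv_ne
    (cores_isHom _ triv_hom1)
  simpa using this

theorem rid_hom {V : Type u} [AddCommGroup V] [Module k V] (ρ : V →ₗ[k] V ⊗[k] G) :
    IsComodHom k G ρ (tensorCoact k G ρ ((TensorProduct.mk k k G).flip 1))
      (TensorProduct.rid k V).symm.toLinearMap := by
  ext v
  simp only [LinearMap.comp_apply, LinearEquiv.coe_coe, rid_symm_apply, tensorCoact_tmul]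
  induction ρ v with
  | zero => simp
  | add a b ha hb => simp only [map_add, add_tmul, ha, hb]
  | tmul a b => simp

theorem RelQ_unique (π : G →ₐc[k] Hh) (hH : IsCosemisimple k Hh) {T : SimpleComodule k Hh}
    {V V' : SimpleComodule k G} (h : RelQ π T V) (h' : RelQ π T V') :
    chainGen k G Hh π V.cls = chainGen k G Hh π V'.cls := by
  obtain ⟨f, hf0, hf⟩ := h
  obtain ⟨f', hf0', hf'⟩ := h'
  obtain ⟨g, hg0, hg⟩ := rev2 hH (resH π V') T.isSimple f' hf0' hf'
  have hs := schur_surj hf T.isSimple hf0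
  have := chain_rel π V V' (trivS k G)
    ((TensorProduct.rid k V'.V).symm.toLinearMap ∘ₗ (g ∘ₗ f)) ?_
    (hom_comp (hom_comp hf hg) (cores_isHom _ (rid_hom V'.ρ)))
  · rw [this, chain_triv, mul_one]
  · intro h
    apply hg0
    ext t
    obtain ⟨v, rfl⟩ := hs t
    have h' : (TensorProduct.rid k V'.V).symm (g (f v)) = 0 := LinearMap.congr_fun h v
    exact (LinearEquiv.map_eq_zero_iff _).1 h'

theorem RelQ_iso (π : G →ₐc[k] Hh) {T T' : SimpleComodule k Hh} (e : comodIsoRel k Hh T T')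
    {V : SimpleComodule k G} (h : RelQ π T V) : RelQ π T' V := by
  obtain ⟨e, he⟩ := e
  obtain ⟨f, hf0, hf⟩ := h
  refine ⟨e.toLinearMap ∘ₗ f, ?_, hom_comp hf he⟩
  intro h
  apply hf0
  ext v
  have := LinearMap.congr_fun h v
  simpa using this

theorem exists_gammaB (π : G →ₐc[k] Hh) (hsurj : Function.Surjective π)
    (hG : IsCosemisimple k G) (hH : IsCosemisimple k Hh) :
    ∃ γ : SimpleComodQuot k Hh → ChainGroup k G Hh π, ∀ T V, RelQ π T V →
      γ T.cls = chainGen k G Hh π V.cls := by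
  choose F hF using exists_RelQ π hsurj hG hH
  refine ⟨Quot.lift (fun T => chainGen k G Hh π (F T).cls) ?_, ?_⟩
  · intro T T' h
    exact RelQ_unique π hH (RelQ_iso π h (hF T)) (hF T')
  · intro T V h
    exact RelQ_unique π hH (hF T) h

theorem gammaB_mul (π : G →ₐc[k] Hh) (hsurj : Function.Surjective π)
    (hG : IsCosemisimple k G) (hH : IsCosemisimple k Hh)
    (γ : SimpleComodQuot k Hh → ChainGroup k G Hh π)
    (hγ : ∀ T V, RelQ π T V → γ T.cls = chainGen k G Hh π V.cls)
    (T T1 T2 : SimpleComodule k Hh) (f : T.V →ₗ[k] T1.V ⊗[k] T2.V) (h0 : f ≠ 0)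
    (hf : IsComodHom k Hh T.ρ (tensorCoact k Hh T1.ρ T2.ρ) f) :
    γ T.cls = γ T1.cls * γ T2.cls := by
  obtain ⟨V, hV⟩ := exists_RelQ π hsurj hG hH T
  obtain ⟨V1, hV1⟩ := exists_RelQ π hsurj hG hH T1
  obtain ⟨V2, hV2⟩ := exists_RelQ π hsurj hG hH T2
  rw [hγ T V hV, hγ T1 V1 hV1, hγ T2 V2 hV2]
  obtain ⟨p, hp0, hp⟩ := hV
  obtain ⟨p1, hp10, hp1⟩ := hV1
  obtain ⟨p2, hp20, hp2⟩ := hV2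
  obtain ⟨i1, hi10, hi1⟩ := rev2 hH (resH π V1) T1.isSimple p1 hp10 hp1
  obtain ⟨i2, hi20, hi2⟩ := rev2 hH (resH π V2) T2.isSimple p2 hp20 hp2
  have hs := schur_surj hp T.isSimple hp0
  have hj1 := schur_inj hi1 T1.isSimple hi10
  have hj2 := schur_inj hi2 T2.isSimple hi20
  have hj : Function.Injective (TensorProduct.map i1 i2) := by
    rw [← LinearMap.rTensor_comp_lTensor, LinearMap.coe_comp]
    exact (Module.Flat.rTensor_preserves_injective_linearMap _ hj1).comp
      (Module.Flat.lTensor_preserves_injective_linearMap _ hj2)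
  refine chain_rel π V V1 V2 (TensorProduct.map i1 i2 ∘ₗ (f ∘ₗ p)) ?_ ?_
  · intro h
    apply h0
    ext t
    obtain ⟨v, rfl⟩ := hs t
    apply hj
    have := LinearMap.congr_fun h v
    simpa using this
  · rw [cores_tensor']
    exact hom_comp (hom_comp hp hf) (tensor_hom hi1 hi2)

theorem range_surj {M : Type u} [Group M] (χ : G →ₐc[k] MonoidAlgebra k M)
    (γ : SimpleComodule k G → M)
    (h : ∀ X : SimpleComodule k G,
      HasCentralChar k G (χ : G →ₗ[k] MonoidAlgebra k M) X (MonoidAlgebra.single (γ X) 1))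
    (hgen : ∀ S : Set M, 1 ∈ S → (∀ X, γ X ∈ S) → (∀ X, (γ X)⁻¹ ∈ S) →
      (∀ x ∈ S, ∀ y ∈ S, x * y ∈ S) → ∀ m, m ∈ S) : Function.Surjective χ := by
  have key : ∀ m : M, ∃ x, χ x = MonoidAlgebra.single m 1 := by
    refine hgen {m | ∃ x, χ x = MonoidAlgebra.single m 1} ?_ ?_ ?_ ?_
    · exact ⟨1, by simp [MonoidAlgebra.one_def]⟩
    · intro X
      obtain ⟨v, f, -, -, hg⟩ := chi_mem (h X)
      exact ⟨f v, hg⟩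
    · intro X
      obtain ⟨v, f, hf, hv, hg⟩ := chi_mem (h X)
      refine ⟨HopfAlgebra.antipode k (f v), ?_⟩
      have h1 : (χ : G →ₗ[k] MonoidAlgebra k M).lTensor G (Coalgebra.comul (R := k) (f v)) = _ :=
        chi_apply (h X) hf v
      have h2 := HopfAlgebra.mul_antipode_rTensor_comul_apply (R := k) (f v)
      have h3 := congrArg χ h2
      have e : ∀ t : G ⊗[k] G, χ (LinearMap.mul' k G
          ((HopfAlgebra.antipode k).rTensor G t)) = LinearMap.mul' k (MonoidAlgebra k M)
          (((χ : G →ₗ[k] MonoidAlgebra k M) ∘ₗ HopfAlgebra.antipode k).rTensor _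
          ((χ : G →ₗ[k] MonoidAlgebra k M).lTensor G t)) := by
        intro t
        induction t with
        | zero => simp
        | add a b ha hb => simp only [map_add, ha, hb]
        | tmul a b => simp
      rw [e, h1, hv] at h3
      simp only [LinearMap.rTensor_tmul, LinearMap.mul'_apply, LinearMap.comp_apply, map_one] at h3
      have h3' : χ (HopfAlgebra.antipode k (f v)) * MonoidAlgebra.single (γ X) 1 = 1 := h3
      have h4 : (MonoidAlgebra.single (γ X) 1 : MonoidAlgebra k M) *
          MonoidAlgebra.single (γ X)⁻¹ 1 = 1 := by
        simp [MonoidAlgebra.single_mul_single, MonoidAlgebra.one_def]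
      exact left_inv_eq_right_inv h3' h4
    · rintro x ⟨a, ha⟩ y ⟨b, hb⟩
      exact ⟨a * b, by rw [map_mul, ha, hb, MonoidAlgebra.single_mul_single, one_mul]⟩
  intro y
  induction y using MonoidAlgebra.induction_linear with
  | zero => exact ⟨0, map_zero _⟩
  | add f g hf hg =>
    obtain ⟨a, rfl⟩ := hf
    obtain ⟨b, rfl⟩ := hg
    exact ⟨a + b, map_add _ _ _⟩
  | single m r =>
    obtain ⟨x, hx⟩ := key m
    exact ⟨r • x, by rw [map_smul, hx]; simp⟩

theorem chain_gen_ind (π : G →ₐc[k] Hh) (S : Set (ChainGroup k G Hh π)) (h1 : 1 ∈ S)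
    (h2 : ∀ x, chainGen k G Hh π x ∈ S) (h3 : ∀ x, (chainGen k G Hh π x)⁻¹ ∈ S)
    (h4 : ∀ x ∈ S, ∀ y ∈ S, x * y ∈ S) (m) : m ∈ S := by
  obtain ⟨x, rfl⟩ := PresentedGroup.mk_surjective _ m
  refine FreeGroup.induction_on (C := fun x => PresentedGroup.mk (chainRels k G Hh π) x ∈ S)
    x ?_ ?_ ?_ ?_
  · rw [map_one]; exact h1
  · intro x; exact h2 x
  · intro x _; rw [map_inv]; exact h3 x
  · intro x y hx hy; rw [map_mul]; exact h4 _ hx _ hy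

end S6
end QG

namespace QG
section S7
variable {k : Type u} [Field k]
variable {G Hh : Type u} [Ring G] [HopfAlgebra k G] [Ring Hh] [HopfAlgebra k Hh]

theorem exists_target (π : G →ₐc[k] Hh) (hsurj : Function.Surjective π)
    (hG : IsCosemisimple k G) (hH : IsCosemisimple k Hh) :
    ∃ (M : Type u) (_ : Group M) (sh : ChainGroup k G Hh π ≃* M)
      (χA : G →ₐc[k] MonoidAlgebra k M) (χB : Hh →ₐc[k] MonoidAlgebra k M),
      χA = χB.comp π ∧ Function.Surjective χA ∧ ∀ X : SimpleComodule k G,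
        HasCentralChar k G (χA : G →ₗ[k] MonoidAlgebra k M) X
          (MonoidAlgebra.single (sh (chainGen k G Hh π X.cls)) 1) := by
  have := small_quot_simple k G
  have : Small.{u} (ChainGroup k G Hh π) := small_presented (chainRels k G Hh π)
  obtain ⟨M, iM, sh⟩ : ∃ (M : Type u) (_ : Group M), Nonempty (ChainGroup k G Hh π ≃* M) :=
    ⟨Shrink.{u} (ChainGroup k G Hh π), inferInstance, ⟨Shrink.mulEquiv.symm⟩⟩
  obtain ⟨sh⟩ := sh
  obtain ⟨χA, hA⟩ := exists_bialg hG (fun x => sh (chainGen k G Hh π x)) (by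
    intro U V W f h0 hf
    rw [← map_mul, chain_rel π U V W f h0 (cores_isHom _ hf)])
  obtain ⟨γ, hγ⟩ := exists_gammaB π hsurj hG hH
  obtain ⟨χB, hB⟩ := exists_bialg hH (fun x => sh (γ x)) (by
    intro U V W f h0 hf
    rw [← map_mul, gammaB_mul π hsurj hG hH γ hγ U V W f h0 hf])
  refine ⟨M, iM, sh, χA, χB, ?_, ?_, hA⟩
  · have key : ∀ X : SimpleComodule k G, HasCentralChar k G
        ((χB : Hh →ₗ[k] MonoidAlgebra k M) ∘ₗ (π : G →ₗ[k] Hh)) X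
          (MonoidAlgebra.single (sh (chainGen k G Hh π X.cls)) 1) := by
      intro X v
      rw [← cores_cores]
      refine cores_all hH (resH π X) ?_ v
      intro T f h0 hf
      have := hγ T X (rev1 hH (resH π X) T.isSimple f h0 hf)
      rw [← this]
      exact hB T
    apply BialgHom.ext
    intro x
    change (χA : G →ₗ[k] MonoidAlgebra k M) x =
      ((χB : Hh →ₗ[k] MonoidAlgebra k M) ∘ₗ (π : G →ₗ[k] Hh)) x
    induction x using cind hG with
    | h0 => simp only [map_zero]
    | hadd x y hx hy => simp only [map_add, hx, hy]
    | H X f hf v => rw [chi_apply' (hA X) hf, chi_apply' (key X) hf]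
  · refine range_surj χA (fun X => sh (chainGen k G Hh π X.cls)) hA ?_
    intro S h1 h2 h3 h4 m
    have := chain_gen_ind π (sh ⁻¹' S) (by simpa using h1) ?_ ?_ ?_ (sh.symm m)
    · simpa using this
    · intro x
      obtain ⟨X, rfl⟩ := Quot.exists_rep x
      exact h2 X
    · intro x
      obtain ⟨X, rfl⟩ := Quot.exists_rep x
      have := h3 X
      rw [← map_inv] at this
      exact this
    · intro x hx y hy
      have := h4 _ hx _ hy
      rw [← map_mul] at this
      exact this

theorem char_iso {C N : Type u} [AddCommGroup C] [Module k C] [Coalgebra k C]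
    [AddCommGroup N] [Module k N] {χ : C →ₗ[k] N}
    {X Y : SimpleComodule k C} (e : comodIsoRel k C X Y) {g : N} (h : HasCentralChar k C χ X g) :
    HasCentralChar k C χ Y g := by
  obtain ⟨e, he⟩ := e
  intro y
  obtain ⟨x, rfl⟩ := e.surjective y
  have := cores_hom (χ := χ) he x
  rw [h x] at this
  simpa using this

theorem exists_c [IsAlgClosed k] {C N : Type u} [AddCommGroup C] [Module k C] [Coalgebra k C]
    [AddCommGroup N] [Module k N] (χ : C →ₗ[k] N)
    (h : ∀ X : SimpleComodule k C, ∃ g : N, HasCentralChar k C χ X g) :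
    ∃ c : SimpleComodQuot k C → N, ∀ X : SimpleComodule k C, HasCentralChar k C χ X (c X.cls) := by
  choose F hF using h
  exact ⟨Quot.lift F fun X Y e => char_unique (char_iso e (hF X)) (hF Y), hF⟩

theorem c_rel {B : Type u} [Ring B] [HopfAlgebra k B] (π : G →ₐc[k] Hh) (β : Hh →ₐc[k] B)
    (c : SimpleComodQuot k G → B)
    (hc : ∀ X : SimpleComodule k G, HasCentralChar k G
      ((β.comp π : G →ₐc[k] B) : G →ₗ[k] B) X (c X.cls))
    (U V W : SimpleComodule k G) (f : U.V →ₗ[k] V.V ⊗[k] W.V) (h0 : f ≠ 0)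
    (hf : IsComodHom k Hh (cores k G (π : G →ₗ[k] Hh) U.ρ)
        (cores k G (π : G →ₗ[k] Hh) (tensorCoact k G V.ρ W.ρ)) f) :
    c U.cls = c V.cls * c W.cls := by
  obtain ⟨u, hu⟩ : ∃ u, f u ≠ 0 := by
    by_contra! h
    exact h0 (LinearMap.ext h)
  refine tmul_left_cancel (k := k) hu ?_
  have h1 := cores_hom (χ := (β : Hh →ₗ[k] B)) hf u
  rw [cores_cores, cores_cores] at h1
  have e : (β : Hh →ₗ[k] B) ∘ₗ (π : G →ₗ[k] Hh) = ((β.comp π : G →ₐc[k] B) : G →ₗ[k] B) := rfl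
  rw [e, hc U u, cores_tensor'] at h1
  rw [LinearMap.rTensor_tmul] at h1
  rw [← h1]
  generalize f u = z
  induction z with
  | zero => simp
  | add a b ha hb => simp only [map_add, add_tmul, ha, hb]
  | tmul v w =>
    rw [tensorCoact_tmul, hc V v, hc W w, TT_tmul]

end S7
end QG

open QG in
/-- For an embedding `H ≤ G` of linearly reductive quantum
groups, the canonical map `can : C(G,H) → Ẑ(G,H)` sending the generator `g_V`
to the central character of `V` restricted to the relative center
`Z(G,H) = Z(G) ∩ H` is a group isomorphism (onto the group of characters of
`Z(G,H)`, i.e. of group-like elements of `O(Z(G,H))`, viewed inside the unit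
group). -/
theorem statement_15 (k : Type u) [Field k] [IsAlgClosed k]
    (G Hh : Type u) [Ring G] [HopfAlgebra k G] [Ring Hh] [HopfAlgebra k Hh]
    (π : G →ₐc[k] Hh) (hsurj : Function.Surjective π)
    (hcssG : IsCosemisimple k G) (hcssH : IsCosemisimple k Hh)
    (Z : Type u) [Ring Z] [HopfAlgebra k Z]
    (ζ : G →ₐc[k] Z) (hζsurj : Function.Surjective ζ)
    (hζcentral : IsCentralMap k G (ζ : G →ₗ[k] Z))
    (hζlargest : ∀ (Z' : Type u) [Ring Z'] [HopfAlgebra k Z'] (ζ' : G →ₐc[k] Z'),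
      Function.Surjective ζ' → IsCentralMap k G (ζ' : G →ₗ[k] Z') →
      ∃ t : Z →ₐc[k] Z', t.comp ζ = ζ')
    (ZH : Type u) [Ring ZH] [HopfAlgebra k ZH]
    (α : Z →ₐc[k] ZH) (β : Hh →ₐc[k] ZH)
    (hαsurj : Function.Surjective α) (hβsurj : Function.Surjective β)
    (hcomm : α.comp ζ = β.comp π)
    (hpushout : ∀ (W : Type u) [Ring W] [HopfAlgebra k W]
      (α' : Z →ₐc[k] W) (β' : Hh →ₐc[k] W), α'.comp ζ = β'.comp π →
      ∃! t : ZH →ₐc[k] W, t.comp α = α' ∧ t.comp β = β') :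
    ∃ can : ChainGroup k G Hh π →* ZHˣ,
      (∀ (x : SimpleComodQuot k G) (X : SimpleComodule k G), X.cls = x →
        ∀ g : Z, IsGroupLike k Z g → HasCentralChar k G (ζ : G →ₗ[k] Z) X g →
          ((can (chainGen k G Hh π x) : ZHˣ) : ZH) = α g) ∧
      Function.Injective can ∧
      (∀ h : ZH, IsGroupLike k ZH h →
        ∃ c : ChainGroup k G Hh π, ((can c : ZHˣ) : ZH) = h) ∧
      (∀ c : ChainGroup k G Hh π, IsGroupLike k ZH ((can c : ZHˣ) : ZH)) := by
  obtain ⟨M, iM, sh, χA, χB, hAB, hAs, hA⟩ := exists_target π hsurj hcssG hcssH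
  obtain ⟨tZ, htZ⟩ := hζlargest (MonoidAlgebra k M) χA hAs (central_of hcssG _ hA)
  obtain ⟨t, ⟨ht, -⟩, -⟩ := hpushout (MonoidAlgebra k M) tZ χB (htZ.trans hAB)
  -- the quotient map to the relative center
  obtain ⟨κ, hκ⟩ : ∃ κ : G →ₐc[k] ZH, κ = α.comp ζ := ⟨_, rfl⟩
  have hκs : Function.Surjective κ := by
    rw [hκ]; exact hαsurj.comp hζsurj
  have hαζ : ∀ (X : SimpleComodule k G) (g : Z), HasCentralChar k G (ζ : G →ₗ[k] Z) X g →
      HasCentralChar k G (κ : G →ₗ[k] ZH) X (α g) := by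
    intro X g hg
    rw [hκ]
    exact char_comp hg (α : Z →ₗ[k] ZH)
  obtain ⟨c, hc⟩ := exists_c (κ : G →ₗ[k] ZH) (fun X => by
    obtain ⟨g, hg⟩ := exists_central (ζ : G →ₗ[k] Z) hζcentral X
    exact ⟨_, hαζ X g hg⟩)
  have hgl : ∀ x, IsGroupLikeElem k (c x) := by
    intro x
    obtain ⟨X, rfl⟩ := Quot.exists_rep x
    exact char_grouplike (bialg_counit κ) (bialg_comul κ) (hc X)
  have htc : ∀ x, t (c x) = MonoidAlgebra.single (sh (chainGen k G Hh π x)) 1 := by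
    intro x
    obtain ⟨X, rfl⟩ := Quot.exists_rep x
    have h1 := char_comp (hc X) (t : ZH →ₗ[k] MonoidAlgebra k M)
    have e : (t : ZH →ₗ[k] MonoidAlgebra k M) ∘ₗ (κ : G →ₗ[k] ZH) =
        (χA : G →ₗ[k] MonoidAlgebra k M) := by
      rw [← htZ, ← ht, hκ]; rfl
    rw [e] at h1
    exact char_unique h1 (hA X)
  let gen : SimpleComodQuot k G → GroupLike k ZH := fun x => ⟨c x, hgl x⟩
  have hrel : ∀ r ∈ chainRels k G Hh π, FreeGroup.lift gen r = 1 := by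
    rintro r ⟨U, V, W, ⟨f, h0, hf⟩, rfl⟩
    rw [map_mul, map_inv, mul_inv_eq_one, map_mul, FreeGroup.lift_apply_of,
      FreeGroup.lift_apply_of, FreeGroup.lift_apply_of]
    apply GroupLike.val_injective
    refine c_rel π β c ?_ U V W f h0 hf
    rw [← hcomm, ← hκ]
    exact hc
  let can0 : ChainGroup k G Hh π →* GroupLike k ZH := PresentedGroup.toGroup hrel
  have hcan0 : ∀ x, can0 (chainGen k G Hh π x) = gen x := fun x =>
    PresentedGroup.toGroup.of hrel
  refine ⟨(GroupLike.toUnits k).comp can0, ?_, ?_, ?_, ?_⟩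
  · rintro x X rfl g - hg
    change (can0 (chainGen k G Hh π X.cls)).val = α g
    rw [hcan0]
    exact char_unique (hc X) (hαζ X g hg)
  · let F : ChainGroup k G Hh π →* MonoidAlgebra k M :=
      (t : ZH →ₐ[k] MonoidAlgebra k M).toMonoidHom.comp
        ((GroupLike.valMonoidHom (R := k) (A := ZH)).comp can0)
    let F' : ChainGroup k G Hh π →* MonoidAlgebra k M :=
      (MonoidAlgebra.of k M).comp sh.toMonoidHom
    have hF : F = F' := by
      have hx : ∀ x, F (chainGen k G Hh π x) = F' (chainGen k G Hh π x) := by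
        intro x
        change t (can0 (chainGen k G Hh π x)).val = _
        rw [hcan0]
        exact htc x
      apply MonoidHom.ext
      refine chain_gen_ind π {m | F m = F' m} ?_ hx ?_ ?_
      · change F 1 = F' 1
        rw [map_one, map_one]
      · intro x
        change F _ = F' _
        refine left_inv_eq_right_inv (a := F (chainGen k G Hh π x)) ?_ ?_
        · rw [← map_mul, inv_mul_cancel, map_one]
        · rw [hx, ← map_mul, mul_inv_cancel, map_one]
      · intro x h1 y h2
        change F _ = F' _
        rw [map_mul, map_mul, h1, h2]
    intro a b hab
    have h1 : (can0 a).val = (can0 b).val := congrArg (fun u : ZHˣ => (u : ZH)) hab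
    have h2 : F a = F b := congrArg t h1
    rw [hF] at h2
    exact sh.injective (MonoidAlgebra.of_injective h2)
  · intro h hh
    have hspan : ∀ x : G, κ x ∈ Submodule.span k (GroupLike.val '' (Set.range gen)) := by
      intro x
      induction x using cind hcssG with
      | h0 => rw [map_zero]; exact Submodule.zero_mem _
      | hadd x y hx hy => rw [map_add]; exact Submodule.add_mem _ hx hy
      | H X f hf v =>
        have := chi_apply' (hc X) hf v
        change κ (f v) = _ at this
        rw [this]
        exact Submodule.smul_mem _ _ (Submodule.subset_span ⟨gen X.cls, ⟨_, rfl⟩, rfl⟩)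
    let h' : GroupLike k ZH := ⟨h, ⟨hh.1, hh.2⟩⟩
    have hmem : h' ∈ Set.range gen := by
      by_contra hn
      refine (linearIndep_groupLikeVal (R := k) (A := ZH)).notMem_span_image hn ?_
      obtain ⟨x, hx⟩ := hκs h
      change h ∈ _
      rw [← hx]
      exact hspan x
    obtain ⟨x, hx⟩ := hmem
    refine ⟨chainGen k G Hh π x, ?_⟩
    change (can0 (chainGen k G Hh π x)).val = h
    rw [hcan0, hx]
  · intro a
    exact ⟨(can0 a).isGroupLikeElem_val.counit_eq_one, (can0 a).isGroupLikeElem_val.comul_eq_tmul_self⟩
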